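/- arXiv:1808.04805 — 4 statements merged into one kernel-verified Lean document; each statement's English description precedes it below -/
import Mathlib

section
/- Let k be a field and n, d, N₁, N₂ natural numbers. Consider the system of N₁ linear equations ∑_{j=1}^{N₂} f_{ij}·Z_j = h_i (for i = 1,…,N₁), where all f_{ij} and h_i are polynomials in k[x_1,…,x_n] of total degree at most d. If this system has a solution with all Z_j in the field of fractions k(x_1,…,x_n), then it has a solution z = (z_1,…,z_{N₂}) in k(x_1,…,x_n) such that every z_j can be written as a ratio p_j/q_j of polynomials p_j, q_j ∈ k[x_1,…,x_n] with q_j ≠ 0 and both p_j and q_j of total degree at most (2·N₁·d)^(2^n). -/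
/-!
Let `A z = b` be the system and `r` the rank of `A` over a field containing the coefficients.
Choose `r` columns of `A` forming a basis of the column space, so that `b` is a combination of
these columns with coefficients `y`, and then `r` rows for which the resulting square submatrix `B`
is invertible. Cramer's rule for `B` gives `det B • y`, whose entries are determinants of size `r`
in the original coefficients; setting the remaining unknowns to `0` yields a solution whose
numerators and common denominator have degree at most `r * d`.
-/

open Matrix

section RankMinors

variable {K m n : Type*} [Field K] [Fintype n]

lemma exists_linearIndependent_col_rank (A : Matrix m n K) :
    ∃ c : Fin A.rank → n, LinearIndependent K (A.col ∘ c) ∧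
      Submodule.span K (Set.range (A.col ∘ c)) = Submodule.span K (Set.range A.col) := by
  have := FiniteDimensional.span_of_finite K (Set.finite_range A.col)
  have hbasis := Submodule.exists_fun_fin_finrank_span_eq K (Set.range A.col)
  rw [← A.rank_eq_finrank_span_cols] at hbasis
  obtain ⟨v, hv, hspan, hli⟩ := hbasis
  choose c hc using hv
  obtain rfl : A.col ∘ c = v := funext hc
  exact ⟨c, hli, hspan⟩

lemma exists_linearIndependent_row_rank [Finite m] (A : Matrix m n K) :
    ∃ e : Fin A.rank → m, LinearIndependent K (A.row ∘ e) := by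
  have := Fintype.ofFinite m
  rw [← A.rank_transpose]
  obtain ⟨e, he, -⟩ := exists_linearIndependent_col_rank Aᵀ
  exact ⟨e, he⟩

lemma exists_isUnit_submatrix_rank [Finite m] (A : Matrix m n K) :
    ∃ (e : Fin A.rank → m) (c : Fin A.rank → n), Function.Injective c ∧
      IsUnit (A.submatrix e c) ∧
      Submodule.span K (Set.range (A.col ∘ c)) = Submodule.span K (Set.range A.col) := by
  have := Fintype.ofFinite m
  obtain ⟨c, hc, hspan⟩ := exists_linearIndependent_col_rank A
  have hrank : (A.submatrix id c).rank = A.rank := by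
    rw [← rank_transpose]
    simpa using LinearIndependent.rank_matrix (M := (A.submatrix id c)ᵀ) hc
  have hrows := exists_linearIndependent_row_rank (A.submatrix id c)
  rw [hrank] at hrows
  obtain ⟨e, he⟩ := hrows
  exact ⟨e, c, hc.injective.of_comp, linearIndependent_rows_iff_isUnit.mp he, hspan⟩

end RankMinors

lemma mulVec_extend_zero {R l m n : Type*} [NonUnitalNonAssocSemiring R] [Fintype l] [Fintype n]
    (A : Matrix m n R) {c : l → n} (hc : Function.Injective c) (y : l → R) :
    A *ᵥ Function.extend c y 0 = A.submatrix id c *ᵥ y := by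
  ext i
  symm
  refine Fintype.sum_of_injective c hc _ _ (fun j hj => ?_) fun s => ?_
  · rw [Function.extend_apply' _ _ _ hj, Pi.zero_apply, mul_zero]
  · simp only [submatrix_apply, id, hc.extend_apply]

section Cramer

variable {S ι : Type*} [CommRing S] [Fintype ι] [DecidableEq ι]

lemma cramer_mulVec (B : Matrix ι ι S) (y : ι → S) : B.cramer (B *ᵥ y) = B.det • y := by
  rw [cramer_eq_adjugate_mulVec, mulVec_mulVec, adjugate_mul, smul_mulVec, one_mulVec]

lemma map_comp_cramer {T : Type*} [CommRing T] (φ : S →+* T) (B : Matrix ι ι S) (b : ι → S) :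
    φ ∘ B.cramer b = (B.map φ).cramer (φ ∘ b) := by
  ext i
  rw [Function.comp_apply, cramer_apply, cramer_apply, RingHom.map_det, RingHom.mapMatrix_apply,
    map_updateCol]

end Cramer

section FractionFree

variable {S K m n : Type*} [CommRing S] [Field K] [Fintype n] {φ : S →+* K} {A : Matrix m n S}
  {b : m → S}

lemma exists_mulVec_extend_cramer_eq_det_smul [Finite m] (hφ : Function.Injective φ)
    (hsol : ∃ z, A.map φ *ᵥ z = φ ∘ b) :
    ∃ (e : Fin (A.map φ).rank → m) (c : Fin (A.map φ).rank → n), Function.Injective c ∧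
      (A.submatrix e c).det ≠ 0 ∧
      A *ᵥ Function.extend c ((A.submatrix e c).cramer (b ∘ e)) 0 = (A.submatrix e c).det • b := by
  obtain ⟨e, c, hc, hunit, hspan⟩ := exists_isUnit_submatrix_rank (A.map φ)
  refine ⟨e, c, hc, fun hdet => ?_, ?_⟩
  · have hdet_ne := ((isUnit_iff_isUnit_det _).mp hunit).ne_zero
    rw [submatrix_map, ← RingHom.mapMatrix_apply, ← RingHom.map_det, hdet, map_zero] at hdet_ne
    exact hdet_ne rfl
  obtain ⟨y, hy⟩ : ∃ y, (A.submatrix id c).map φ *ᵥ y = φ ∘ b := by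
    change φ ∘ b ∈ LinearMap.range ((A.map φ).submatrix id c).mulVecLin
    rw [range_mulVecLin]
    exact hspan.ge ((A.map φ).range_mulVecLin.le hsol)
  have hcramer : φ ∘ (A.submatrix e c).cramer (b ∘ e) = φ (A.submatrix e c).det • y := by
    have hrows : (A.submatrix e c).map φ *ᵥ y = φ ∘ b ∘ e := funext fun i => congrFun hy (e i)
    rw [map_comp_cramer, ← hrows, cramer_mulVec, RingHom.map_det, RingHom.mapMatrix_apply]
  rw [mulVec_extend_zero A hc]
  ext i
  apply hφ
  rw [RingHom.map_mulVec, hcramer, mulVec_smul, hy]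
  simp only [Pi.smul_apply, Function.comp_apply, smul_eq_mul, map_mul]

lemma map_mulVec_div_eq_of_mulVec_eq_smul {p : n → S} {q : S} (hq : φ q ≠ 0)
    (hpq : A *ᵥ p = q • b) : A.map φ *ᵥ (fun j => φ (p j) / φ q) = φ ∘ b := by
  have hdiv : (fun j => φ (p j) / φ q) = (φ q)⁻¹ • (φ ∘ p) :=
    funext fun j => div_eq_inv_mul _ _
  ext i
  rw [hdiv, mulVec_smul, Pi.smul_apply, ← RingHom.map_mulVec, hpq, Pi.smul_apply, smul_eq_mul,
    smul_eq_mul, map_mul, inv_mul_cancel_left₀ hq, Function.comp_apply]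

end FractionFree

section TotalDegree

variable {R σ ι : Type*} [CommRing R] [Fintype ι] [DecidableEq ι] {d : ℕ}
  {M : Matrix ι ι (MvPolynomial σ R)}

lemma totalDegree_det_le (hM : ∀ i j, (M i j).totalDegree ≤ d) :
    M.det.totalDegree ≤ Fintype.card ι * d := by
  rw [det_apply]
  refine MvPolynomial.totalDegree_finsetSum_le fun g _ => ?_
  calc (Equiv.Perm.sign g • ∏ i, M (g i) i).totalDegree
      ≤ (∏ i, M (g i) i).totalDegree := MvPolynomial.totalDegree_smul_le _ _
    _ ≤ ∑ i, (M (g i) i).totalDegree := MvPolynomial.totalDegree_finsetProd _ _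
    _ ≤ ∑ _i : ι, d := Finset.sum_le_sum fun i _ => hM (g i) i
    _ = Fintype.card ι * d := by rw [Finset.sum_const, Finset.card_univ, smul_eq_mul]

lemma totalDegree_cramer_le {b : ι → MvPolynomial σ R} (hM : ∀ i j, (M i j).totalDegree ≤ d)
    (hb : ∀ i, (b i).totalDegree ≤ d) (j : ι) :
    (M.cramer b j).totalDegree ≤ Fintype.card ι * d := by
  rw [cramer_apply]
  refine totalDegree_det_le fun i l => ?_
  rw [updateCol_apply]
  split_ifs
  exacts [hb i, hM i l]

end TotalDegree

theorem solvable_over_function_field_bounded_solution_general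
    {R σ K m n : Type*} [CommRing R] [Field K] [Finite m] [Fintype n]
    {φ : MvPolynomial σ R →+* K} (hφ : Function.Injective φ) {d : ℕ}
    {A : Matrix m n (MvPolynomial σ R)} {b : m → MvPolynomial σ R}
    (hA : ∀ i j, (A i j).totalDegree ≤ d) (hb : ∀ i, (b i).totalDegree ≤ d)
    (hsol : ∃ z, A.map φ *ᵥ z = φ ∘ b) :
    ∃ (p : n → MvPolynomial σ R) (q : MvPolynomial σ R), q ≠ 0 ∧
      A.map φ *ᵥ (fun j => φ (p j) / φ q) = φ ∘ b ∧
      (∀ j, (p j).totalDegree ≤ (A.map φ).rank * d) ∧ q.totalDegree ≤ (A.map φ).rank * d := by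
  obtain ⟨e, c, hc, hdet, hcramer⟩ := exists_mulVec_extend_cramer_eq_det_smul hφ hsol
  have hminor : ∀ i l, (A.submatrix e c i l).totalDegree ≤ d := fun i l => hA (e i) (c l)
  have hrhs : ∀ i, ((b ∘ e) i).totalDegree ≤ d := fun i => hb (e i)
  refine ⟨Function.extend c ((A.submatrix e c).cramer (b ∘ e)) 0, (A.submatrix e c).det, hdet,
    map_mulVec_div_eq_of_mulVec_eq_smul ((map_ne_zero_iff φ hφ).mpr hdet) hcramer, fun j => ?_, ?_⟩
  · by_cases hj : ∃ s, c s = j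
    · obtain ⟨s, rfl⟩ := hj
      rw [hc.extend_apply]
      simpa only [Fintype.card_fin] using totalDegree_cramer_le hminor hrhs s
    · rw [Function.extend_apply' _ _ _ hj, Pi.zero_apply, MvPolynomial.totalDegree_zero]
      exact Nat.zero_le _
  · simpa only [Fintype.card_fin] using totalDegree_det_le hminor

/-- Effective faithful flatness over the rational function field: a linear
system over `k[x₁,…,xₙ]` with coefficients of degree at most `d` that is solvable in
`k(x₁,…,xₙ)` has a solution whose entries are ratios of polynomials of total degree at
most `(2·N₁·d)^(2^n)`. -/
theorem solvable_over_function_field_bounded_solution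
    (k : Type*) [Field k] (n d N₁ N₂ : ℕ)
    (f : Fin N₁ → Fin N₂ → MvPolynomial (Fin n) k)
    (h : Fin N₁ → MvPolynomial (Fin n) k)
    (hf : ∀ i j, (f i j).totalDegree ≤ d)
    (hh : ∀ i, (h i).totalDegree ≤ d)
    (hsol : ∃ z : Fin N₂ → FractionRing (MvPolynomial (Fin n) k),
      ∀ i, ∑ j, algebraMap (MvPolynomial (Fin n) k)
          (FractionRing (MvPolynomial (Fin n) k)) (f i j) * z j =
        algebraMap (MvPolynomial (Fin n) k)
          (FractionRing (MvPolynomial (Fin n) k)) (h i)) :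
    ∃ z : Fin N₂ → FractionRing (MvPolynomial (Fin n) k),
      (∀ i, ∑ j, algebraMap (MvPolynomial (Fin n) k)
          (FractionRing (MvPolynomial (Fin n) k)) (f i j) * z j =
        algebraMap (MvPolynomial (Fin n) k)
          (FractionRing (MvPolynomial (Fin n) k)) (h i)) ∧
      ∀ j, ∃ p q : MvPolynomial (Fin n) k, q ≠ 0 ∧
        p.totalDegree ≤ (2 * N₁ * d) ^ 2 ^ n ∧
        q.totalDegree ≤ (2 * N₁ * d) ^ 2 ^ n ∧
        z j = algebraMap (MvPolynomial (Fin n) k)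
            (FractionRing (MvPolynomial (Fin n) k)) p /
          algebraMap (MvPolynomial (Fin n) k)
            (FractionRing (MvPolynomial (Fin n) k)) q := by
  have hbound : ((Matrix.of f).map (algebraMap _ (FractionRing (MvPolynomial (Fin n) k)))).rank * d
      ≤ (2 * N₁ * d) ^ 2 ^ n := calc
    _ ≤ N₁ * d := Nat.mul_le_mul_right d (rank_le_height _)
    _ ≤ 2 * N₁ * d := Nat.mul_le_mul_right d (Nat.le_mul_of_pos_left N₁ two_pos)
    _ ≤ (2 * N₁ * d) ^ 2 ^ n := Nat.le_self_pow (NeZero.ne _) _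
  obtain ⟨p, q, hq, hpq, hp_deg, hq_deg⟩ := solvable_over_function_field_bounded_solution_general
    (IsFractionRing.injective _ _) hf hh (hsol.imp fun _ => funext)
  exact ⟨_, congrFun hpq, fun j =>
    ⟨p j, q, hq, (hp_deg j).trans hbound, hq_deg.trans hbound, rfl⟩⟩
end

section
/- Let p be a prime, k a field of characteristic p, and m, n, N₁, N₂, B natural numbers. Consider the system of N₁ homogeneous equations ∑_{j=1}^{N₂} f_{ij}·Y_j^(p^m) = 0 (for i = 1,…,N₁), where the f_{ij} are polynomials in k[x_1,…,x_n] of total degree at most B. Then every solution y = (y_1,…,y_{N₂}) ∈ (k[x_1,…,x_n])^{N₂} of the system lies in the k[x_1,…,x_n]-submodule of (k[x_1,…,x_n])^{N₂} spanned by those solutions whose entries all have total degree at most (2·N₁²·N₂·C(B+n, n)·p^(m(n−1))·B)^(2^n), where C(B+n, n) is the binomial coefficient. -/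
/-!
Put `q = p ^ m`. The Frobenius system is turned into a *linear* system over `k[x]` with the same
solutions, to which Hermann's elimination argument applies.

**Linearization.** For an additive `π : k → k` with `π (b ^ q * a) = b * π a` and an exponent `α`
with all entries `< q`, the Cartier operator `∑ c_u x^u ↦ ∑ π (c_{α + qβ}) x^β` sends `a ^ q * g` to
`a` times the image of `g`, and it does not raise degrees. As `k` is a vector space over its
subfield of `q`-th powers, these operators jointly separate points, so `∑ f_j y_j ^ q = 0` if and
only if every one of them, applied to the `f_j`, gives coefficients of a linear equation satisfied
by `y`. This linear system may be infinite, but a nonvanishing minor of maximal size singles out at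
most `N₂` rows with the same solutions.

**Linear systems.** For `R` equations of degree at most `d` in `n` variables the solutions are
generated in degree at most `(2Rd)^(2^n)`. Over an infinite field this is an induction on `n`: after
a linear change of coordinates a maximal nonzero minor is monic, up to a unit, in one variable `X`;
modulo the solutions given by Cramer's rule every solution can be reduced to have `X`-degree less
than `Rd`; comparing coefficients of powers of `X` then leaves a system of `R (Rd + d)` equations in
one variable fewer. The induction closes because it carries the sharper bound `(2Rd)^(2^n) - Rd`. An
arbitrary field is embedded in its algebraic closure `K`, and generators are carried back by
applying `k`-linear functionals `K → k` to their coefficients.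

This gives generators of degree at most `(2 N₂ B)^(2^n)`.
-/

namespace FrobeniusSystem

open Matrix MvPolynomial

section Spans

variable {ι ι' τ τ' S T : Type*} [Fintype τ] [Fintype τ'] [CommSemiring S] [CommSemiring T]

/-- The solutions of the homogeneous linear system with matrix `A` whose entries all lie in `P`. In
the applications `P` is cut out by a bound on total degrees. -/
def solutionsIn (A : Matrix ι τ S) (P : Set S) : Set (τ → S) :=
  {v | A *ᵥ v = 0 ∧ ∀ j, v j ∈ P}

/-- The solutions of the homogeneous linear system with matrix `A` are linear combinations of those
with entries in `P`. -/
def SolutionsSpannedIn (A : Matrix ι τ S) (P : Set S) : Prop :=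
  ∀ y, A *ᵥ y = 0 → y ∈ Submodule.span S (solutionsIn A P)

lemma apply_mem_span_of_semilinear {R R' M M' : Type*} [Semiring R] [Semiring R']
    [AddCommMonoid M] [Module R M] [AddCommMonoid M'] [Module R' M'] {σ : R →+* R'}
    (g : M →ₛₗ[σ] M') {s : Set M} {t : Set M'} (h : ∀ v ∈ s, g v ∈ t) {x : M}
    (hx : x ∈ Submodule.span R s) : g x ∈ Submodule.span R' t :=
  (Submodule.span_le (p := (Submodule.span R' t).comap g)).2
    (fun v hv => Submodule.subset_span (h v hv)) hx

lemma SolutionsSpannedIn.map_mem_span {A : Matrix ι τ S} {P : Set S} (h : SolutionsSpannedIn A P)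
    {B : Matrix ι' τ' T} {Q : Set T} {σ : S →+* T} (g : (τ → S) →ₛₗ[σ] (τ' → T))
    (hg : ∀ v ∈ solutionsIn A P, g v ∈ solutionsIn B Q) {y : τ → S} (hy : A *ᵥ y = 0) :
    g y ∈ Submodule.span T (solutionsIn B Q) :=
  apply_mem_span_of_semilinear g hg (h y hy)

lemma SolutionsSpannedIn.mono {A : Matrix ι τ S} {B : Matrix ι' τ S} {P Q : Set S}
    (h : SolutionsSpannedIn A P) (hAB : ∀ y, A *ᵥ y = 0 ↔ B *ᵥ y = 0) (hPQ : P ⊆ Q) :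
    SolutionsSpannedIn B Q := fun y hy =>
  Submodule.span_mono (fun v hv => And.intro ((hAB v).1 hv.1) fun j => hPQ (hv.2 j))
    (h y ((hAB y).2 hy))

lemma map_mulVec_eq_zero_iff {φ : S →+* T}
    (hφ : Function.Injective φ) (A : Matrix ι τ S) (y : τ → S) :
    A.map φ *ᵥ (φ ∘ y) = 0 ↔ A *ᵥ y = 0 := by
  simp only [funext_iff, ← RingHom.map_mulVec, Pi.zero_apply, map_eq_zero_iff φ hφ]

lemma SolutionsSpannedIn.of_map_ringEquiv {A : Matrix ι τ S} {Q : Set T} (e : S ≃+* T)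
    (h : SolutionsSpannedIn (A.map e) Q) : SolutionsSpannedIn A (e ⁻¹' Q) := by
  let g : (τ → T) →ₛₗ[(e.symm : T →+* S)] (τ → S) :=
    { toFun := fun y => e.symm ∘ y
      map_add' := fun y y' => funext fun j => map_add e.symm (y j) (y' j)
      map_smul' := fun a y => funext fun j => map_mul e.symm a (y j) }
  have hAe : ∀ y, A.map e *ᵥ (e ∘ y) = 0 ↔ A *ᵥ y = 0 :=
    map_mulVec_eq_zero_iff (φ := (e : S →+* T)) e.injective A
  have hcancel : ∀ y : τ → T, e ∘ g y = y := fun y => funext fun j => e.apply_symm_apply (y j)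
  intro y hy
  have hgy : g (e ∘ y) = y := funext fun j => e.symm_apply_apply (y j)
  rw [← hgy]
  refine h.map_mem_span g (fun v hv => ⟨(hAe _).1 (by rw [hcancel, hv.1]), fun j => ?_⟩)
    ((hAe y).2 hy)
  simpa [g] using hv.2 j

end Spans

section Minors

variable {ι τ S : Type*}

lemma exists_submatrix_det_ne_zero_of_linearIndependent_row {κ K : Type*} [Finite τ] [Field K]
    [Fintype κ] [DecidableEq κ] {A : Matrix κ τ K} (hA : LinearIndependent K A.row) :
    ∃ c : κ → τ, (A.submatrix id c).det ≠ 0 := by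
  have := Fintype.ofFinite τ
  obtain ⟨κ', c, hc, hspan, hli⟩ := exists_linearIndependent' K A.col
  have : Fintype κ' := have := Finite.of_injective c hc; Fintype.ofFinite κ'
  have hcard : Fintype.card κ = Fintype.card κ' := by
    rw [← hA.rank_matrix, rank_eq_finrank_span_cols, ← hspan, finrank_span_eq_card hli]
  let e : κ ≃ κ' := Fintype.equivOfCardEq hcard
  refine ⟨c ∘ e, ((isUnit_iff_isUnit_det _).1 ?_).ne_zero⟩
  exact linearIndependent_cols_iff_isUnit.1 (hli.comp e e.injective)

variable [Fintype τ]

lemma mulVec_eq_zero_of_row_mem_span [CommSemiring S] {κ : Type*} {A : Matrix ι τ S}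
    {B : Matrix κ τ S} (h : ∀ i, A.row i ∈ Submodule.span S (Set.range B.row)) {y : τ → S}
    (hy : B *ᵥ y = 0) : A *ᵥ y = 0 := by
  funext i
  have hle : Submodule.span S (Set.range B.row) ≤
      LinearMap.ker ((dotProductBilin S S).flip y) := by
    rw [Submodule.span_le]
    rintro _ ⟨a, rfl⟩
    exact congrFun hy a
  exact hle (h i)

lemma exists_submatrix_det_ne_zero_of_field {K : Type*} [Field K] [DecidableEq ι]
    (A : Matrix ι τ K) :
    ∃ (s : Finset ι) (c : s → τ), (A.submatrix (↑) c).det ≠ 0 ∧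
      ∀ y, A.submatrix ((↑) : s → ι) id *ᵥ y = 0 → A *ᵥ y = 0 := by
  obtain ⟨s, -, -, hspan, hli⟩ :=
    exists_linearIndepOn_extension (linearIndepOn_empty K A.row) (Set.empty_subset Set.univ)
  have hs : s.Finite := LinearIndependent.finite hli
  lift s to Finset ι using hs
  obtain ⟨c, hc⟩ := exists_submatrix_det_ne_zero_of_linearIndependent_row
    (A := A.submatrix ((↑) : s → ι) id) hli
  refine ⟨s, c, hc, fun y hy => mulVec_eq_zero_of_row_mem_span (fun i => ?_) hy⟩
  have hi := hspan (Set.mem_image_of_mem A.row (Set.mem_univ i))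
  rwa [Set.image_eq_range] at hi

lemma exists_submatrix_det_ne_zero [CommRing S] [IsDomain S] [DecidableEq ι] (A : Matrix ι τ S) :
    ∃ (s : Finset ι) (c : s → τ), (A.submatrix (↑) c).det ≠ 0 ∧
      ∀ y, A.submatrix ((↑) : s → ι) id *ᵥ y = 0 ↔ A *ᵥ y = 0 := by
  let φ := algebraMap S (FractionRing S)
  have hφ : Function.Injective φ := IsFractionRing.injective S _
  obtain ⟨s, c, hdet, hsol⟩ := exists_submatrix_det_ne_zero_of_field (A.map φ)
  refine ⟨s, c, fun h => hdet ?_, fun y => ⟨fun hy => ?_, fun hy => ?_⟩⟩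
  · rw [submatrix_map]
    exact (φ.map_det _).symm.trans (by rw [h, map_zero])
  · exact (map_mulVec_eq_zero_iff hφ A y).1
      (hsol _ ((map_mulVec_eq_zero_iff hφ (A.submatrix ((↑) : s → ι) id) y).2 hy))
  · exact funext fun a => congrFun hy a

lemma card_le_rank_of_submatrix_det_ne_zero [CommRing S] [IsDomain S] {κ : Type*} [Fintype κ]
    [DecidableEq κ] {A : Matrix ι τ S} {s : κ → ι} {c : κ → τ} (h : (A.submatrix s c).det ≠ 0) :
    Fintype.card κ ≤ A.rank :=
  (rank_of_det_ne_zero h).symm.le.trans (A.rank_submatrix_le s c)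

end Minors

section Cramer

variable {ρ τ S : Type*} [Fintype ρ] [DecidableEq ρ] [DecidableEq τ] [CommRing S]

lemma totalDegree_det_le {σ : Type*} {M : Matrix ρ ρ (MvPolynomial σ S)} {d : ℕ}
    (hM : ∀ i j, (M i j).totalDegree ≤ d) : M.det.totalDegree ≤ Fintype.card ρ * d := by
  rw [det_apply]
  refine totalDegree_finsetSum_le fun g _ => ?_
  calc _ ≤ (∏ i, M (g i) i).totalDegree := by
        rw [Units.smul_def]
        exact totalDegree_smul_le _ _
    _ ≤ ∑ i, (M (g i) i).totalDegree := totalDegree_finsetProd _ _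
    _ ≤ ∑ _ : ρ, d := Finset.sum_le_sum fun i _ => hM _ _
    _ = Fintype.card ρ * d := by simp

/-- The solution provided by Cramer's rule of the system with matrix `A`, in which the unknown `j`
is the minor with columns `c` and the other unknowns outside `c` vanish. For `j` among the columns
`c` it is zero. -/
def cramerSolution (A : Matrix ρ τ S) (c : ρ → τ) (j : τ) : τ → S :=
  Pi.single j (A.submatrix id c).det -
    ∑ a, Pi.single (c a) ((A.submatrix id c).cramer (A.col j) a)

variable (A : Matrix ρ τ S) (c : ρ → τ)

lemma cramerSolution_apply_of_notMem (j : τ) {t : τ} (ht : t ∉ Set.range c) :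
    cramerSolution A c j t = if t = j then (A.submatrix id c).det else 0 := by
  have hne : ∀ a, t ≠ c a := fun a h => ht ⟨a, h.symm⟩
  simp [cramerSolution, Finset.sum_apply, Pi.single_apply, hne]

lemma cramerSolution_apply_column (b : ρ) : cramerSolution A c (c b) = 0 := by
  have hcramer : (A.submatrix id c).cramer (A.col (c b)) =
      Pi.single b (A.submatrix id c).det := cramer_row_self _ _ b fun _ => rfl
  rw [cramerSolution, hcramer, sub_eq_zero, Finset.sum_eq_single b] <;> simp +contextual

lemma map_cramerSolution {T : Type*} [CommRing T] (φ : S →+* T) (j t : τ) :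
    cramerSolution (A.map φ) c j t = φ (cramerSolution A c j t) := by
  have hdet : ((A.map φ).submatrix id c).det = φ (A.submatrix id c).det := (φ.map_det _).symm
  have hcramer : ∀ a, ((A.map φ).submatrix id c).cramer ((A.map φ).col j) a =
      φ ((A.submatrix id c).cramer (A.col j) a) := fun a => by
    rw [cramer_apply, cramer_apply, φ.map_det, RingHom.mapMatrix_apply, map_updateCol]
    rfl
  simp [cramerSolution, hdet, hcramer, Finset.sum_apply, Pi.single_apply, apply_ite φ]

lemma totalDegree_cramerSolution_le {σ : Type*} {A : Matrix ρ τ (MvPolynomial σ S)} {d : ℕ}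
    (hA : ∀ i j, (A i j).totalDegree ≤ d) (c : ρ → τ) (j t : τ) :
    (cramerSolution A c j t).totalDegree ≤ Fintype.card ρ * d := by
  have hsingle : ∀ (i : τ) {x : MvPolynomial σ S}, x.totalDegree ≤ Fintype.card ρ * d →
      (Pi.single (M := fun _ => MvPolynomial σ S) i x t).totalDegree ≤ Fintype.card ρ * d := by
    intro i x hx
    rw [Pi.single_apply]
    split_ifs
    · exact hx
    · simp
  rw [cramerSolution, Pi.sub_apply, Finset.sum_apply]
  refine (totalDegree_sub _ _).trans (max_le (hsingle _ ?_) ?_)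
  · exact totalDegree_det_le fun i k => hA _ _
  · refine totalDegree_finsetSum_le fun a _ => hsingle _ ?_
    rw [cramer_apply]
    refine totalDegree_det_le fun i k => ?_
    rw [updateCol_apply]
    split_ifs <;> exact hA _ _

variable [Fintype τ]

lemma mulVec_cramerSolution (j : τ) : A *ᵥ cramerSolution A c j = 0 := by
  have h := mulVec_cramer (A.submatrix id c) (A.col j)
  rw [mulVec_eq_sum] at h
  rw [cramerSolution, mulVec_sub, mulVec_sum, sub_eq_zero, mulVec_single, op_smul_eq_smul, ← h]
  simp only [mulVec_single]
  rfl

variable {A} in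
lemma mulVec_sub_sum_smul_cramerSolution (q : τ → S) {y : τ → S} (hy : A *ᵥ y = 0) :
    A *ᵥ (y - ∑ j, q j • cramerSolution A c j) = 0 := by
  simp [mulVec_sub, mulVec_sum, mulVec_smul, mulVec_cramerSolution, hy]

variable {A} in
lemma det_smul_eq_sum_smul_cramerSolution {y : τ → S} (hy : A *ᵥ y = 0) :
    (A.submatrix id c).det • y = ∑ j, y j • cramerSolution A c j := by
  have hcramer : ∑ j, y j • (A.submatrix id c).cramer (A.col j) = 0 := by
    simp_rw [← map_smul, ← map_sum, ← op_smul_eq_smul]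
    rw [show ∑ j, MulOpposite.op (y j) • A.col j = 0 from (mulVec_eq_sum y A).symm.trans hy,
      map_zero]
  funext t
  have hsum : ∀ a, ∑ j, y j * (A.submatrix id c).cramer (A.col j) a = 0 := fun a => by
    simpa [Finset.sum_apply] using congrFun hcramer a
  simp only [cramerSolution, Finset.sum_apply, Pi.smul_apply, Pi.sub_apply, smul_eq_mul, mul_sub,
    Finset.sum_sub_distrib, Finset.mul_sum, Pi.single_apply, mul_ite, mul_zero]
  rw [Finset.sum_comm, Finset.sum_eq_zero (s := (Finset.univ : Finset ρ)) fun a _ => ?_]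
  · simp [mul_comm]
  · split_ifs
    · exact hsum a
    · exact Finset.sum_const_zero

end Cramer

section Elimination

open scoped Polynomial

variable {ρ τ S : Type*}

lemma exists_degree_sub_mul_lt [CommRing S] [Nontrivial S] {g : S[X]} (hg : IsUnit g.leadingCoeff)
    (f : S[X]) : ∃ q, (f - g * q).degree < g.degree := by
  obtain ⟨u, hu⟩ := hg.exists_right_inv
  have hmonic : (g * Polynomial.C u).Monic :=
    Polynomial.monic_mul_C_of_leadingCoeff_mul_eq_one hu
  refine ⟨Polynomial.C u * (f /ₘ (g * Polynomial.C u)), ?_⟩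
  rw [← mul_assoc, ← Polynomial.modByMonic_eq_sub_mul_div]
  calc _ < (g * Polynomial.C u).degree := Polynomial.degree_modByMonic_lt f hmonic
    _ ≤ g.degree + (Polynomial.C u).degree := Polynomial.degree_mul_le _ _
    _ ≤ g.degree := by grw [Polynomial.degree_C_le, add_zero]

section Reduction

variable [Fintype ρ] [DecidableEq ρ] [Fintype τ] [DecidableEq τ] [CommRing S] [IsDomain S]
  {A : Matrix ρ τ S[X]} {c : ρ → τ}

lemma degree_lt_of_degree_lt_degree_det {L : ℕ} (hdet : (A.submatrix id c).det ≠ 0)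
    (hdeg : ∀ j t, (cramerSolution A c j t).degree ≤ L) {y : τ → S[X]} (hy : A *ᵥ y = 0)
    (hlt : ∀ t ∉ Set.range c, (y t).degree < (A.submatrix id c).det.degree) (t : τ) :
    (y t).degree < L := by
  set Δ := (A.submatrix id c).det
  have hterm : ∀ j, (y j * cramerSolution A c j t).degree < Δ.degree + L := by
    intro j
    by_cases hj : j ∈ Set.range c
    · obtain ⟨b, rfl⟩ := hj
      simp [cramerSolution_apply_column, Polynomial.degree_eq_natDegree hdet, bot_lt_iff_ne_bot]
    · calc _ ≤ (y j).degree + L := by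
            grw [Polynomial.degree_mul_le, hdeg]
        _ < Δ.degree + L := WithBot.add_lt_add_right (WithBot.natCast_ne_bot L) (hlt j hj)
  have hsum : Δ * y t = ∑ j, y j * cramerSolution A c j t := by
    simpa using congrFun (det_smul_eq_sum_smul_cramerSolution c hy) t
  have hmul : Δ.degree + (y t).degree < Δ.degree + L := by
    rw [← Polynomial.degree_mul, hsum]
    refine (Polynomial.degree_sum_le _ _).trans_lt ?_
    rw [Finset.sup_lt_iff ((bot_le).trans_lt (hterm t))]
    exact fun j _ => hterm j
  exact lt_of_add_lt_add_left hmul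

lemma exists_degree_sub_sum_smul_cramerSolution_lt {L : ℕ}
    (hlead : IsUnit (A.submatrix id c).det.leadingCoeff)
    (hdeg : ∀ j t, (cramerSolution A c j t).degree ≤ L) {y : τ → S[X]} (hy : A *ᵥ y = 0) :
    ∃ q : τ → S[X], ∀ t, ((y - ∑ j, q j • cramerSolution A c j) t).degree < L := by
  choose q hq using fun j => exists_degree_sub_mul_lt hlead (y j)
  refine ⟨q, degree_lt_of_degree_lt_degree_det (Polynomial.leadingCoeff_ne_zero.1 hlead.ne_zero)
    hdeg (mulVec_sub_sum_smul_cramerSolution c q hy) fun t ht => ?_⟩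
  simpa [Finset.sum_apply, cramerSolution_apply_of_notMem A c _ ht, mul_comm] using hq t

end Reduction

section CoefficientMatrix

variable [CommSemiring S]

/-- Vectors of polynomials of degree less than `L`, parametrized by their coefficients. The map is
semilinear over the inclusion of the constants, so that it carries spans over `S` into spans over
`S[X]`. -/
noncomputable def polynomialVec (L : ℕ) :
    (τ × Fin L → S) →ₛₗ[(Polynomial.C : S →+* S[X])] (τ → S[X]) where
  toFun z j := ∑ l : Fin L, Polynomial.C (z (j, l)) * Polynomial.X ^ (l : ℕ)
  map_add' z z' := by
    funext j
    simp [add_mul, Finset.sum_add_distrib]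
  map_smul' a z := by
    funext j
    simp [Finset.mul_sum, mul_assoc]

lemma polynomialVec_apply {L : ℕ} (z : τ × Fin L → S) (j : τ) :
    polynomialVec L z j = ∑ l : Fin L, Polynomial.C (z (j, l)) * Polynomial.X ^ (l : ℕ) :=
  rfl

lemma polynomialVec_coeff {L : ℕ} {y : τ → S[X]} (hy : ∀ j, (y j).degree < L) :
    polynomialVec L (fun jl => (y jl.1).coeff jl.2) = y := by
  funext j
  rw [polynomialVec_apply, Fin.sum_univ_eq_sum_range
    (fun l => Polynomial.C ((y j).coeff l) * Polynomial.X ^ l)]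
  by_cases h0 : y j = 0
  · simp [h0]
  · exact ((y j).as_sum_range_C_mul_X_pow' ((Polynomial.natDegree_lt_iff_degree_lt h0).2
      (hy j))).symm

/-- The system for the coefficients of polynomial solutions of degree less than `L` of a system `A`
with entries of degree at most `d`, obtained by comparing the coefficients of `X ^ t` for
`t < L + d`. -/
noncomputable def coeffMatrix (A : Matrix ρ τ S[X]) (d L : ℕ) :
    Matrix (ρ × Fin (L + d)) (τ × Fin L) S :=
  of fun i j => (A i.1 j.1 * Polynomial.X ^ (j.2 : ℕ)).coeff i.2

lemma coeffMatrix_apply (A : Matrix ρ τ S[X]) {d L : ℕ} (i : ρ × Fin (L + d)) (j : τ × Fin L) :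
    coeffMatrix A d L i j =
      if (j.2 : ℕ) ≤ i.2 then (A i.1 j.1).coeff (i.2 - j.2) else 0 :=
  Polynomial.coeff_mul_X_pow' _ _ _

variable [Fintype τ]

lemma coeff_mulVec_polynomialVec (A : Matrix ρ τ S[X]) {d L : ℕ} (z : τ × Fin L → S) (i : ρ)
    (t : Fin (L + d)) :
    ((A *ᵥ polynomialVec L z) i).coeff t = (coeffMatrix A d L *ᵥ z) (i, t) := by
  simp only [mulVec, dotProduct, polynomialVec_apply, coeffMatrix, of_apply, Finset.mul_sum,
    Polynomial.finsetSum_coeff, Fintype.sum_prod_type, ← mul_assoc,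
    ← Polynomial.coeff_mul_C, mul_right_comm]

lemma coeffMatrix_mulVec_eq_zero_iff {A : Matrix ρ τ S[X]} {d L : ℕ}
    (hA : ∀ i j, (A i j).degree ≤ d) (z : τ × Fin L → S) :
    coeffMatrix A d L *ᵥ z = 0 ↔ A *ᵥ polynomialVec L z = 0 := by
  refine ⟨fun h => ?_, fun h => ?_⟩
  · funext i
    have hdeg : ((A *ᵥ polynomialVec L z) i).degree < (L + d : ℕ) := by
      refine (Polynomial.degree_sum_le _ _).trans_lt
        ((Finset.sup_lt_iff (WithBot.bot_lt_coe _)).2 fun j _ => ?_)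
      calc _ ≤ d + (polynomialVec L z j).degree := by grw [Polynomial.degree_mul_le, hA]
        _ < d + (L : WithBot ℕ) :=
          WithBot.add_lt_add_left (WithBot.natCast_ne_bot d) (Polynomial.degree_sum_fin_lt _)
        _ = (L + d : ℕ) := by rw [add_comm, Nat.cast_add]
    ext t
    rcases lt_or_ge t (L + d) with ht | ht
    · exact (coeff_mulVec_polynomialVec A z i ⟨t, ht⟩).trans (congrFun h (i, ⟨t, ht⟩))
    · exact Polynomial.coeff_eq_zero_of_degree_lt (hdeg.trans_le (by exact_mod_cast ht))
  · funext ⟨i, t⟩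
    rw [← coeff_mulVec_polynomialVec, h]
    rfl

end CoefficientMatrix

/-- Modulo Cramer's solutions every solution has entries of degree less than `L`, hence comes from a
solution of the coefficient system. -/
theorem SolutionsSpannedIn.of_coeffMatrix [Fintype ρ] [DecidableEq ρ] [Fintype τ] [DecidableEq τ]
    [CommRing S] [IsDomain S] {A : Matrix ρ τ S[X]} {c : ρ → τ} {d L : ℕ} {P : Set S[X]}
    {P' : Set S} (hA : ∀ i j, (A i j).degree ≤ d)
    (hlead : IsUnit (A.submatrix id c).det.leadingCoeff)
    (hdeg : ∀ j t, (cramerSolution A c j t).degree ≤ L)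
    (hcramer : ∀ j t, cramerSolution A c j t ∈ P)
    (hP : ∀ z : τ × Fin L → S, (∀ jl, z jl ∈ P') → ∀ j, polynomialVec L z j ∈ P)
    (h : SolutionsSpannedIn (coeffMatrix A d L) P') : SolutionsSpannedIn A P := by
  intro y hy
  obtain ⟨q, hq⟩ := exists_degree_sub_sum_smul_cramerSolution_lt hlead hdeg hy
  have hsol := mulVec_sub_sum_smul_cramerSolution c q hy
  rw [← sub_add_cancel y (∑ j, q j • cramerSolution A c j), ← polynomialVec_coeff hq]
  refine add_mem (h.map_mem_span (polynomialVec L) (fun z hz => ?_) ?_) (sum_mem fun j _ =>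
    Submodule.smul_mem _ _ (Submodule.subset_span ⟨mulVec_cramerSolution A c j, hcramer j⟩))
  · exact ⟨(coeffMatrix_mulVec_eq_zero_iff hA z).1 hz.1, hP z hz.2⟩
  · rwa [coeffMatrix_mulVec_eq_zero_iff hA, polynomialVec_coeff hq]

theorem SolutionsSpannedIn.of_coeffMatrix_map {R : Type*} [Fintype ρ] [DecidableEq ρ] [Fintype τ]
    [DecidableEq τ] [CommRing R] [CommRing S] [IsDomain S] (e : R ≃+* S[X]) {A : Matrix ρ τ R}
    {c : ρ → τ} {d L : ℕ} {P : Set R} {P' : Set S} (hA : ∀ i j, (e (A i j)).degree ≤ d)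
    (hlead : IsUnit (e (A.submatrix id c).det).leadingCoeff)
    (hdeg : ∀ j t, (e (cramerSolution A c j t)).degree ≤ L)
    (hcramer : ∀ j t, cramerSolution A c j t ∈ P)
    (hP : ∀ z : τ × Fin L → S, (∀ jl, z jl ∈ P') → ∀ j, e.symm (polynomialVec L z j) ∈ P)
    (h : SolutionsSpannedIn (coeffMatrix (A.map e) d L) P') : SolutionsSpannedIn A P := by
  have hcramer_map : ∀ j t, cramerSolution (A.map e) c j t = e (cramerSolution A c j t) :=
    map_cramerSolution A c (e : R →+* S[X])
  have hdet_map : ((A.map e).submatrix id c).det = e (A.submatrix id c).det :=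
    ((e : R →+* S[X]).map_det _).symm
  have hmap : SolutionsSpannedIn (A.map e) (e.symm ⁻¹' P) := by
    refine .of_coeffMatrix (c := c) hA (by rwa [hdet_map]) (fun j t => ?_) (fun j t => ?_) hP h
    · rw [hcramer_map]
      exact hdeg j t
    · rw [hcramer_map, Set.mem_preimage, e.symm_apply_apply]
      exact hcramer j t
  simpa [Set.preimage, e.symm_apply_apply] using hmap.of_map_ringEquiv e

end Elimination

section LinearSubstitution

variable {σ σ' : Type*}

section CommSemiring

variable {k : Type*} [CommSemiring k]

lemma totalDegree_aeval_le_of_linear {g : σ → MvPolynomial σ' k}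
    (hg : ∀ i, (g i).totalDegree ≤ 1) (f : MvPolynomial σ k) :
    (aeval g f).totalDegree ≤ f.totalDegree := by
  rw [aeval_def, eval₂_eq]
  refine totalDegree_finsetSum_le fun u hu => ?_
  calc (algebraMap k _ (f.coeff u) * ∏ i ∈ u.support, g i ^ u i).totalDegree
      ≤ (C (f.coeff u)).totalDegree + (∏ i ∈ u.support, g i ^ u i).totalDegree :=
        totalDegree_mul _ _
    _ = (∏ i ∈ u.support, g i ^ u i).totalDegree := by rw [totalDegree_C, zero_add]
    _ ≤ ∑ i ∈ u.support, (g i ^ u i).totalDegree := totalDegree_finsetProd _ _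
    _ ≤ ∑ i ∈ u.support, u i := Finset.sum_le_sum fun i _ =>
        (totalDegree_pow _ _).trans (by simpa using Nat.mul_le_mul_left (u i) (hg i))
    _ ≤ f.totalDegree := le_totalDegree hu

lemma homogeneousComponent_totalDegree_ne_zero {f : MvPolynomial σ k} (hf : f ≠ 0) :
    homogeneousComponent f.totalDegree f ≠ 0 := by
  obtain ⟨u, hu, hdeg⟩ := Finset.exists_mem_eq_sup f.support (support_nonempty.2 hf) Finsupp.degree
  refine ne_zero_iff.2 ⟨u, ?_⟩
  have hu' : u.degree = f.totalDegree := hdeg.symm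
  rwa [coeff_homogeneousComponent, if_pos hu', ← mem_support_iff]

variable [DecidableEq σ]

lemma coeff_single_of_isHomogeneous {f : MvPolynomial σ k} {e : ℕ} (hf : f.IsHomogeneous e)
    (i : σ) : f.coeff (Finsupp.single i e) = eval (Pi.single i 1) f := by
  have hsingle : ∀ u ∈ f.support, u ≠ Finsupp.single i e →
      ∏ j ∈ u.support, (Pi.single i 1 : σ → k) j ^ u j = 0 := by
    intro u hu hne
    obtain ⟨j, hj, hji⟩ : ∃ j ∈ u.support, j ≠ i := by
      by_contra! h
      refine hne ?_
      obtain ⟨m, rfl⟩ := Finsupp.support_subset_singleton'.1 fun j hj =>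
        Finset.mem_singleton.2 (h j hj)
      have hdeg : (Finsupp.single i m).degree = e := by
        rw [Finsupp.degree_eq_weight_one]
        exact hf (mem_support_iff.1 hu)
      rw [← hdeg, Finsupp.degree_single]
    exact Finset.prod_eq_zero hj (by simp [hji, Finsupp.mem_support_iff.1 hj])
  rw [eval_eq, Finset.sum_eq_single (Finsupp.single i e)]
  · rw [Finset.prod_eq_one fun j hj => ?_, mul_one]
    rw [Finset.mem_singleton.1 (Finsupp.support_single_subset hj), Pi.single_eq_same, one_pow]
  · intro u hu hne
    exact mul_eq_zero_of_right _ (hsingle u hu hne)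
  · intro h
    rw [notMem_support_iff.1 h, zero_mul]

lemma coeff_single_totalDegree_aeval {g : σ' → MvPolynomial σ k}
    (hg : ∀ j, (g j).IsHomogeneous 1) (f : MvPolynomial σ' k) (i : σ) :
    (aeval g f).coeff (Finsupp.single i f.totalDegree) =
      eval (fun j => eval (Pi.single i 1) (g j)) (homogeneousComponent f.totalDegree f) := by
  have hhom : ∀ e, (aeval g (homogeneousComponent e f)).IsHomogeneous e := fun e => by
    simpa using (homogeneousComponent_isHomogeneous e f).aeval g hg
  have hsum : aeval g f = ∑ e ∈ Finset.range (f.totalDegree + 1),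
      aeval g (homogeneousComponent e f) := by
    rw [← map_sum, sum_homogeneousComponent]
  rw [hsum, coeff_sum, Finset.sum_eq_single_of_mem f.totalDegree (by simp) fun e _ he => ?_,
    coeff_single_of_isHomogeneous (hhom _), ← coe_aeval_eq_eval, ← coe_aeval_eq_eval]
  · exact DFunLike.congr_fun (comp_aeval g (aeval (Pi.single i (1 : k)))) _
  · exact (hhom e).coeff_eq_zero (by simpa using he.symm)

end CommSemiring

lemma exists_ne_zero_eval_ne_zero {k : Type*} [CommRing k] [IsDomain k] [Infinite k]
    {f : MvPolynomial σ k} (hf : f ≠ 0) (i : σ) : ∃ b : σ → k, b i ≠ 0 ∧ eval b f ≠ 0 := by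
  by_contra! h
  refine mul_ne_zero (X_ne_zero i) hf (MvPolynomial.funext fun b => ?_)
  by_cases hb : b i = 0
  · simp [hb]
  · simp [h b hb]

section MoveAxis

variable {k : Type*} [DecidableEq σ]

/-- The linear substitution that moves the basis vector with index `i₀` to `b`: the value of
`moveAxis i₀ b f` at `a` is the value of `f` at `a i₀ • b + Function.update a i₀ 0`. -/
noncomputable def moveAxis [CommSemiring k] (i₀ : σ) (b : σ → k) :
    MvPolynomial σ k →ₐ[k] MvPolynomial σ k :=
  aeval fun i => C (b i) * X i₀ + if i = i₀ then 0 else X i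

section CommSemiring

variable [CommSemiring k] (i₀ : σ)

lemma moveAxis_X (b : σ → k) (i : σ) :
    moveAxis i₀ b (X i) = C (b i) * X i₀ + if i = i₀ then 0 else X i :=
  aeval_X _ _

lemma isHomogeneous_moveAxis_X (b : σ → k) (i : σ) :
    (C (b i) * X i₀ + if i = i₀ then 0 else X i : MvPolynomial σ k).IsHomogeneous 1 := by
  refine (isHomogeneous_C_mul_X _ _).add ?_
  split_ifs
  · exact isHomogeneous_zero _ _ _
  · exact isHomogeneous_X _ _

lemma totalDegree_moveAxis_le (b : σ → k) (f : MvPolynomial σ k) :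
    (moveAxis i₀ b f).totalDegree ≤ f.totalDegree :=
  totalDegree_aeval_le_of_linear (fun i => (isHomogeneous_moveAxis_X i₀ b i).totalDegree_le) f

lemma coeff_single_moveAxis (b : σ → k) (f : MvPolynomial σ k) :
    (moveAxis i₀ b f).coeff (Finsupp.single i₀ f.totalDegree) =
      eval b (homogeneousComponent f.totalDegree f) := by
  rw [moveAxis, coeff_single_totalDegree_aeval (isHomogeneous_moveAxis_X i₀ b)]
  congr 2
  funext i
  by_cases hi : i = i₀ <;> simp [hi]

variable {i₀} in
lemma moveAxis_comp {b b' : σ → k} (h₀ : b' i₀ * b i₀ = 1)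
    (h : ∀ i ≠ i₀, b i + b' i * b i₀ = 0) :
    (moveAxis i₀ b).comp (moveAxis i₀ b') = AlgHom.id k _ := by
  refine algHom_ext fun i => ?_
  rw [AlgHom.comp_apply, moveAxis_X, map_add, map_mul, algHom_C, moveAxis_X, if_pos rfl, add_zero,
    algebraMap_eq, ← mul_assoc, ← C_mul]
  split_ifs with hi
  · subst hi
    simp [h₀]
  · rw [moveAxis_X, if_neg hi, ← add_assoc, ← add_mul, ← C_add, add_comm (b' i * b i₀), h i hi]
    simp

end CommSemiring

/-- `moveAxis` as an automorphism, for `b` outside the span of the other basis vectors. -/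
noncomputable def moveAxisEquiv [Field k] (i₀ : σ) (b : σ → k) (hb : b i₀ ≠ 0) :
    MvPolynomial σ k ≃ₐ[k] MvPolynomial σ k :=
  AlgEquiv.ofAlgHom (moveAxis i₀ b)
    (moveAxis i₀ (Function.update (fun i => -(b i / b i₀)) i₀ (b i₀)⁻¹))
    (moveAxis_comp (by simp [hb]) fun i hi => by simp [hb, hi])
    (moveAxis_comp (by simp [hb]) fun i hi => by simp [hi, div_eq_mul_inv])

end MoveAxis

end LinearSubstitution

section Coordinates

variable {k : Type*} {n : ℕ}

lemma finSuccEquiv_rename_succ [CommSemiring k] (a : MvPolynomial (Fin n) k) :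
    finSuccEquiv k n (rename Fin.succ a) = Polynomial.C a := by
  have h : (finSuccEquiv k n : _ →ₐ[k] _).comp (rename Fin.succ) =
      Polynomial.CAlgHom (A := MvPolynomial (Fin n) k) :=
    algHom_ext fun i => by simp [finSuccEquiv_X_succ]
  exact DFunLike.congr_fun h a

variable [Field k]

/-- The identification of `k[x₀, …, xₙ]` with `k[x₁, …, xₙ][X]` in linear coordinates whose first
axis is spanned by `b`. -/
noncomputable def coordEquiv (b : Fin (n + 1) → k) (hb : b 0 ≠ 0) :
    MvPolynomial (Fin (n + 1)) k ≃ₐ[k] Polynomial (MvPolynomial (Fin n) k) :=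
  (moveAxisEquiv 0 b hb).trans (finSuccEquiv k n)

variable {b : Fin (n + 1) → k} (hb : b 0 ≠ 0)

lemma coordEquiv_apply (f : MvPolynomial (Fin (n + 1)) k) :
    coordEquiv b hb f = finSuccEquiv k n (moveAxis 0 b f) :=
  rfl

lemma totalDegree_coeff_coordEquiv_add_le {f : MvPolynomial (Fin (n + 1)) k} {i : ℕ}
    (h : (coordEquiv b hb f).coeff i ≠ 0) :
    ((coordEquiv b hb f).coeff i).totalDegree + i ≤ f.totalDegree := by
  rw [coordEquiv_apply] at h ⊢
  exact (totalDegree_coeff_finSuccEquiv_add_le _ _ h).trans (totalDegree_moveAxis_le 0 b f)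

lemma totalDegree_coeff_coordEquiv_le (f : MvPolynomial (Fin (n + 1)) k) (i : ℕ) :
    ((coordEquiv b hb f).coeff i).totalDegree ≤ f.totalDegree := by
  by_cases h : (coordEquiv b hb f).coeff i = 0
  · simp [h]
  · exact (Nat.le_add_right _ i).trans (totalDegree_coeff_coordEquiv_add_le hb h)

lemma degree_coordEquiv_le {f : MvPolynomial (Fin (n + 1)) k} {d : ℕ} (hf : f.totalDegree ≤ d) :
    (coordEquiv b hb f).degree ≤ d := by
  rw [Polynomial.degree_le_iff_coeff_zero]
  intro i hi
  by_contra h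
  have := (totalDegree_coeff_coordEquiv_add_le hb h).trans hf
  have : d < i := by exact_mod_cast hi
  omega

lemma totalDegree_coordEquiv_symm_le (a : MvPolynomial (Fin n) k) (l : ℕ) :
    ((coordEquiv b hb).symm (Polynomial.C a * Polynomial.X ^ l)).totalDegree ≤
      a.totalDegree + l := by
  have h : (finSuccEquiv k n).symm (Polynomial.C a * Polynomial.X ^ l) =
      rename Fin.succ a * X 0 ^ l := by
    rw [AlgEquiv.symm_apply_eq, map_mul, map_pow, finSuccEquiv_X_zero, finSuccEquiv_rename_succ]
  calc _ ≤ ((finSuccEquiv k n).symm (Polynomial.C a * Polynomial.X ^ l)).totalDegree :=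
        totalDegree_moveAxis_le _ _ _
    _ ≤ a.totalDegree + l := by
        rw [h]
        exact (totalDegree_mul _ _).trans (add_le_add (totalDegree_rename_le _ _) (by simp))

lemma isUnit_leadingCoeff_coordEquiv {f : MvPolynomial (Fin (n + 1)) k}
    (hf : eval b (homogeneousComponent f.totalDegree f) ≠ 0) :
    IsUnit (coordEquiv b hb f).leadingCoeff := by
  set g := (coordEquiv b hb f).coeff f.totalDegree
  have hg0 : g.coeff 0 = eval b (homogeneousComponent f.totalDegree f) := by
    rw [← coeff_single_moveAxis, ← Finsupp.cons_zero_eq_single_zero, ← finSuccEquiv_coeff_coeff,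
      ← coordEquiv_apply hb]
  have hg : g ≠ 0 := fun h => hf (by rw [← hg0, h, coeff_zero])
  have hgdeg : g.totalDegree = 0 := by
    have : g.totalDegree + f.totalDegree ≤ f.totalDegree :=
      totalDegree_coeff_coordEquiv_add_le hb hg
    omega
  have hlead : (coordEquiv b hb f).leadingCoeff = g := by
    refine congrArg _ (le_antisymm ?_ (Polynomial.le_natDegree_of_ne_zero hg))
    exact Polynomial.natDegree_le_of_degree_le (degree_coordEquiv_le hb le_rfl)
  rw [hlead, totalDegree_eq_zero_iff_eq_C.1 hgdeg, hg0]
  exact (IsUnit.mk0 _ hf).map C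

end Coordinates

section Hermann

variable {k : Type*} [Field k] [Infinite k] {n d : ℕ} {ι τ : Type*} [Fintype τ]

lemma exists_elimination_system {ρ : Type*} [Fintype ρ] [DecidableEq ρ]
    {A : Matrix ρ τ (MvPolynomial (Fin (n + 1)) k)} {c : ρ → τ} (hc : (A.submatrix id c).det ≠ 0)
    (hA : ∀ i j, (A i j).totalDegree ≤ d) {L : ℕ} (hL : Fintype.card ρ * d ≤ L) :
    ∃ B : Matrix (ρ × Fin (L + d)) (τ × Fin L) (MvPolynomial (Fin n) k),
      (∀ i j, (B i j).totalDegree ≤ d) ∧ ∀ D, SolutionsSpannedIn B {f | f.totalDegree ≤ D} →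
        SolutionsSpannedIn A {f | f.totalDegree ≤ D + L} := by
  classical
  obtain ⟨b, hb0, hb⟩ :=
    exists_ne_zero_eval_ne_zero (homogeneousComponent_totalDegree_ne_zero hc) 0
  let e := (coordEquiv b hb0).toRingEquiv
  have hcramer : ∀ j t, (cramerSolution A c j t).totalDegree ≤ L := fun j t =>
    (totalDegree_cramerSolution_le hA c j t).trans hL
  refine ⟨coeffMatrix (A.map e) d L, fun i j => ?_, fun D => .of_coeffMatrix_map e
    (fun i j => degree_coordEquiv_le hb0 (hA i j)) (isUnit_leadingCoeff_coordEquiv hb0 hb)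
    (fun j t => degree_coordEquiv_le hb0 (hcramer j t))
    (fun j t => (hcramer j t).trans (Nat.le_add_left L D)) fun z hz j => ?_⟩
  · rw [coeffMatrix_apply]
    split_ifs
    · exact (totalDegree_coeff_coordEquiv_le hb0 _ _).trans (hA _ _)
    · simp
  · rw [polynomialVec_apply, Set.mem_ofPred_eq, map_sum]
    exact totalDegree_finsetSum_le fun l _ =>
      (totalDegree_coordEquiv_symm_le hb0 _ _).trans (add_le_add (hz _) l.2.le)

/-- With `R` equations of degree `d`, eliminating a variable leaves `R * (R * d + d)` equations,
still of degree `d`, and costs `R * d` in the degrees of the generators. -/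
lemma elimination_bound_le (R d n : ℕ) :
    (2 * (R * (R * d + d)) * d) ^ 2 ^ n - R * (R * d + d) * d + R * d ≤
      (2 * R * d) ^ 2 ^ (n + 1) - R * d := by
  have hR : R ≤ R * R := Nat.le_mul_self R
  have hd : d ≤ d * d := Nat.le_mul_self d
  have hpow : (2 * (R * (R * d + d)) * d) ^ 2 ^ n ≤ (2 * R * d) ^ 2 ^ (n + 1) := by
    rw [pow_succ' 2 n, pow_mul]
    refine Nat.pow_le_pow_left ?_ _
    calc 2 * (R * (R * d + d)) * d = 2 * (R * R * (d * d)) + 2 * (R * (d * d)) := by ring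
      _ ≤ 2 * (R * R * (d * d)) + 2 * (R * R * (d * d)) := by gcongr
      _ = (2 * R * d) ^ 2 := by ring
  have hmul : R * d + R * d ≤ R * (R * d + d) * d := by
    calc R * d + R * d ≤ R * R * (d * d) + R * (d * d) := by gcongr
      _ = R * (R * d + d) * d := by ring
  have hself : R * (R * d + d) * d ≤ (2 * (R * (R * d + d)) * d) ^ 2 ^ n :=
    (by rw [mul_assoc 2]; omega : _ ≤ 2 * (R * (R * d + d)) * d).trans
      (Nat.le_self_pow (by positivity) _)
  omega

/-- The summand `- R * d` makes the induction on `n` close. -/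
theorem solutionsSpannedIn_of_infinite {A : Matrix ι τ (MvPolynomial (Fin n) k)} {R : ℕ}
    (hR : A.rank ≤ R) (hA : ∀ i j, (A i j).totalDegree ≤ d) :
    SolutionsSpannedIn A {f | f.totalDegree ≤ (2 * R * d) ^ 2 ^ n - R * d} := by
  classical
  induction n generalizing R ι τ with
  | zero =>
    refine fun y hy => Submodule.subset_span ⟨hy, fun j => ?_⟩
    rw [Set.mem_ofPred_eq, eq_C_of_isEmpty (y j), totalDegree_C]
    exact Nat.zero_le _
  | succ n ih =>
    obtain ⟨s, c, hc, hsol⟩ := exists_submatrix_det_ne_zero A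
    have hs : Fintype.card s ≤ R := (card_le_rank_of_submatrix_det_ne_zero hc).trans hR
    obtain ⟨B, hB, hAB⟩ := exists_elimination_system
      (A := A.submatrix ((↑) : s → ι) id) hc (fun i j => hA _ _) (Nat.mul_le_mul_right d hs)
    have hBR : B.rank ≤ R * (R * d + d) := by
      refine (rank_le_card_height B).trans ?_
      rw [Fintype.card_prod, Fintype.card_fin]
      exact Nat.mul_le_mul_right _ hs
    exact (hAB _ (ih hBR hB)).mono hsol fun f hf => hf.trans (elimination_bound_le R d n)

end Hermann

section Cartier

variable {σ k K : Type*} [CommSemiring k] [CommSemiring K]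

lemma injective_add_nsmul (q : ℕ) [NeZero q] (α : σ →₀ ℕ) :
    Function.Injective fun β : σ →₀ ℕ => α + q • β := fun β β' h => by
  ext i
  simpa [NeZero.ne q] using DFunLike.congr_fun (add_left_cancel h) i

/-- The Cartier operator `∑ c_u x^u ↦ ∑ π (c_{α + qβ}) x^β`. For `q = 1` and `α = 0` it applies
`π` to all coefficients, which serves to descend along a field extension. -/
noncomputable def cartier (q : ℕ) [NeZero q] (π : K →+ k) (α : σ →₀ ℕ) :
    MvPolynomial σ K →+ MvPolynomial σ k where
  toFun f := .ofCoeff (((AddMonoidAlgebra.coeff f).comapDomain (fun β => α + q • β)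
    (injective_add_nsmul q α).injOn).mapRange π π.map_zero)
  map_zero' := by
    ext
    exact π.map_zero
  map_add' f g := by
    ext β
    exact π.map_add _ _

variable (q : ℕ) [NeZero q] {π : K →+ k} {α : σ →₀ ℕ}

lemma coeff_cartier (f : MvPolynomial σ K) (β : σ →₀ ℕ) :
    (cartier q π α f).coeff β = π (f.coeff (α + q • β)) :=
  rfl

lemma totalDegree_cartier_le (f : MvPolynomial σ K) :
    (cartier q π α f).totalDegree ≤ f.totalDegree := by
  refine Finset.sup_le fun β hβ => ?_
  rw [mem_support_iff, coeff_cartier] at hβ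
  have hu : α + q • β ∈ f.support := mem_support_iff.2 fun h => hβ (by rw [h, map_zero])
  calc β.degree ≤ α.degree + q * β.degree :=
        (Nat.le_mul_of_pos_left _ (NeZero.pos q)).trans (Nat.le_add_left _ _)
    _ = (α + q • β).degree := by rw [map_add, map_nsmul, smul_eq_mul]
    _ ≤ f.totalDegree := le_totalDegree hu

lemma nsmul_le_add_nsmul_iff {q : ℕ} (hα : ∀ i, α i < q) {γ β : σ →₀ ℕ} :
    q • γ ≤ α + q • β ↔ γ ≤ β := by
  refine forall_congr' fun i => ?_
  have hq : 0 < q := pos_of_gt (hα i)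
  change q * γ i ≤ α i + q * β i ↔ γ i ≤ β i
  rw [mul_comm q (γ i), ← Nat.le_div_iff_mul_le hq, Nat.add_mul_div_left _ _ hq,
    Nat.div_eq_of_lt (hα i), zero_add]

lemma cartier_expand_map_mul {F : k →+* K} (hπ : ∀ c a, π (F c * a) = c * π a)
    (hα : ∀ i, α i < q) (a : MvPolynomial σ k) (g : MvPolynomial σ K) :
    cartier q π α (expand q (map F a) * g) = a * cartier q π α g := by
  induction a using MvPolynomial.induction_on' with
  | add a a' ha ha' => simp only [map_add, add_mul, ha, ha']
  | monomial γ c =>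
    ext β
    rw [coeff_cartier, map_monomial, expand_monomial, coeff_monomial_mul', coeff_monomial_mul']
    simp only [nsmul_le_add_nsmul_iff hα]
    split_ifs with h
    · rw [hπ, coeff_cartier, ← tsub_add_cancel_of_le h, nsmul_add, ← add_assoc,
        add_tsub_cancel_right, add_tsub_cancel_right]
    · exact map_zero π

end Cartier

section BaseChange

attribute [local instance] algebraMvPolynomial

variable {ι τ σ k K : Type*}

section Coefficients

variable [CommSemiring k] [CommSemiring K] [Algebra k K]

lemma span_range_C_eq_top :
    Submodule.span (MvPolynomial σ k) (Set.range (C : K → MvPolynomial σ K)) = ⊤ := by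
  refine Submodule.eq_top_iff'.2 fun f => ?_
  induction f using MvPolynomial.induction_on' with
  | add f g hf hg => exact add_mem hf hg
  | monomial u c =>
    have : monomial u c = (monomial u 1 : MvPolynomial σ k) • (C c : MvPolynomial σ K) := by
      rw [Algebra.smul_def, algebraMap_def, map_monomial, mul_comm, C_mul_monomial, map_one,
        mul_one]
    rw [this]
    exact Submodule.smul_mem _ _ (Submodule.subset_span (Set.mem_range_self c))

/-- The application of a `k`-linear functional `π` to the coefficients of the entries of a vector,
which carries solutions over `K` to solutions over `k`. -/
noncomputable def mapCoeffs (π : K →ₗ[k] k) :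
    (τ → MvPolynomial σ K) →ₗ[MvPolynomial σ k] (τ → MvPolynomial σ k) where
  toFun y j := cartier 1 π.toAddMonoidHom 0 (y j)
  map_add' y y' := by
    funext j
    exact map_add _ _ _
  map_smul' a y := by
    funext j
    have h := cartier_expand_map_mul 1 (π := π.toAddMonoidHom) (α := 0) (F := algebraMap k K)
      (fun c b => by simp [← Algebra.smul_def]) (by simp) a (y j)
    rwa [expand_one_apply] at h

lemma mapCoeffs_apply (π : K →ₗ[k] k) (y : τ → MvPolynomial σ K) (j : τ) :
    mapCoeffs π y j = cartier 1 π.toAddMonoidHom 0 (y j) :=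
  rfl

lemma mapCoeffs_map_mulVec [Fintype τ] (π : K →ₗ[k] k) (A : Matrix ι τ (MvPolynomial σ k))
    (v : τ → MvPolynomial σ K) :
    mapCoeffs π (A.map (map (algebraMap k K)) *ᵥ v) = A *ᵥ mapCoeffs π v := by
  funext i
  have h : ∀ j, A i j * mapCoeffs π v j =
      cartier 1 π.toAddMonoidHom 0 (map (algebraMap k K) (A i j) * v j) := fun j =>
    (congrFun ((mapCoeffs π).map_smul (A i j) v) j).symm
  simp only [mapCoeffs_apply, mulVec, dotProduct, map_sum, map_apply] at h ⊢
  exact Finset.sum_congr rfl fun j _ => (h j).symm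

end Coefficients

variable [Field k] [Nontrivial K]

lemma exists_linearMap_apply_algebraMap [Ring K] [Algebra k K] :
    ∃ π : K →ₗ[k] k, ∀ a, π (algebraMap k K a) = a := by
  obtain ⟨π, hπ⟩ := Module.Projective.exists_dual_eq_one k (one_ne_zero (α := K))
  exact ⟨π, fun a => by rw [Algebra.algebraMap_eq_smul_one, map_smul, hπ, smul_eq_mul, mul_one]⟩

theorem SolutionsSpannedIn.of_map_algebraMap [Fintype τ] [CommRing K] [Algebra k K]
    {A : Matrix ι τ (MvPolynomial σ k)} {D : ℕ}
    (h : SolutionsSpannedIn (A.map (map (algebraMap k K))) {f | f.totalDegree ≤ D}) :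
    SolutionsSpannedIn A {f | f.totalDegree ≤ D} := by
  intro y hy
  obtain ⟨π, hπ⟩ := exists_linearMap_apply_algebraMap (k := k) (K := K)
  have hπy : mapCoeffs π (map (algebraMap k K) ∘ y) = y := by
    funext j
    ext β
    simp [mapCoeffs_apply, coeff_cartier, coeff_map, hπ]
  have hyK : A.map (map (algebraMap k K)) *ᵥ (map (algebraMap k K) ∘ y) = 0 :=
    (map_mulVec_eq_zero_iff (map_injective _ (algebraMap k K).injective) A y).2 hy
  have hspan := h _ hyK
  rw [← Submodule.restrictScalars_mem (MvPolynomial σ k),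
    ← Submodule.span_smul_of_span_eq_top span_range_C_eq_top] at hspan
  rw [← hπy]
  refine apply_mem_span_of_semilinear (mapCoeffs π) ?_ hspan
  rintro _ ⟨_, ⟨c, rfl⟩, v, ⟨hv, hdeg⟩, rfl⟩
  refine ⟨?_, fun j => (totalDegree_cartier_le 1 _).trans ?_⟩
  · rw [← mapCoeffs_map_mulVec, mulVec_smul, hv, smul_zero, map_zero]
  · exact (totalDegree_mul _ _).trans (by simpa using hdeg j)

end BaseChange

theorem solutionsSpannedIn_totalDegree_le {ι τ k : Type*} [Fintype τ] [Field k] {n d : ℕ}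
    {A : Matrix ι τ (MvPolynomial (Fin n) k)} (hA : ∀ i j, (A i j).totalDegree ≤ d) :
    SolutionsSpannedIn A {f | f.totalDegree ≤ (2 * A.rank * d) ^ 2 ^ n} := by
  classical
  obtain ⟨s, c, hc, hsol⟩ := exists_submatrix_det_ne_zero A
  let F : MvPolynomial (Fin n) k →+* MvPolynomial (Fin n) (AlgebraicClosure k) :=
    map (algebraMap k (AlgebraicClosure k))
  have hrank : ((A.submatrix ((↑) : s → ι) id).map F).rank ≤ A.rank :=
    (rank_le_card_height _).trans (card_le_rank_of_submatrix_det_ne_zero hc)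
  have hdeg : ∀ i j, ((A.submatrix ((↑) : s → ι) id).map F i j).totalDegree ≤ d := fun i j =>
    (Finset.sup_mono (support_map_subset _ _)).trans (hA i j)
  have hclosure := solutionsSpannedIn_of_infinite hrank hdeg
  have hfinite : SolutionsSpannedIn (A.submatrix ((↑) : s → ι) id) _ := .of_map_algebraMap hclosure
  exact hfinite.mono hsol fun f hf => hf.trans (Nat.sub_le _ _)

section Linearization

variable {ι τ σ k K : Type*} [Field k]

lemma exists_semilinear_apply_ne_zero [CommRing K] (F : k →+* K) {c : K} (hc : c ≠ 0) :
    ∃ π : K →+ k, (∀ b a, π (F b * a) = b * π a) ∧ π c ≠ 0 := by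
  let := F.toAlgebra
  obtain ⟨π, hπ⟩ := Module.Projective.exists_dual_ne_zero k hc
  exact ⟨π.toAddMonoidHom, fun b a => π.map_smul b a, hπ⟩

lemma eq_zero_of_cartier_eq_zero [CommRing K] {q : ℕ} [NeZero q] (F : k →+* K)
    {g : MvPolynomial σ K}
    (h : ∀ (π : K →+ k) (α : σ →₀ ℕ), (∀ b a, π (F b * a) = b * π a) → (∀ i, α i < q) →
      cartier q π α g = 0) : g = 0 := by
  ext u
  by_contra hu
  obtain ⟨π, hπ, hπu⟩ := exists_semilinear_apply_ne_zero F hu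
  let α : σ →₀ ℕ := u.mapRange (· % q) (Nat.zero_mod q)
  let β : σ →₀ ℕ := u.mapRange (· / q) (Nat.zero_div q)
  have huαβ : α + q • β = u := by
    ext i
    exact Nat.mod_add_div (u i) q
  apply hπu
  rw [← huαβ, ← coeff_cartier, h π α hπ fun i => Nat.mod_lt _ (NeZero.pos q), coeff_zero]

/-- The linear system equivalent to the equations `∑ j, f i j * expand q (map F (y j)) = 0`,
obtained by applying to the `f i j` all the Cartier operators, with `π` semilinear over `F` and `α`
with entries less than `q`. For `F` the `m`-th iterate of the Frobenius endomorphism and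
`q = p ^ m` the equations are `∑ j, f i j * y j ^ q = 0`. -/
noncomputable def linearization [CommRing K] (q : ℕ) [NeZero q] (F : k →+* K)
    (f : Matrix ι τ (MvPolynomial σ K)) :
    Matrix (ι × {π : K →+ k // ∀ b a, π (F b * a) = b * π a} × {α : σ →₀ ℕ // ∀ i, α i < q}) τ
      (MvPolynomial σ k) :=
  of fun i j => cartier q i.2.1 i.2.2 (f i.1 j)

lemma totalDegree_linearization_le [CommRing K] {q : ℕ} [NeZero q] {F : k →+* K} {B : ℕ}
    {f : Matrix ι τ (MvPolynomial σ K)} (hf : ∀ i j, (f i j).totalDegree ≤ B) (i) (j : τ) :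
    (linearization q F f i j).totalDegree ≤ B :=
  (totalDegree_cartier_le q _).trans (hf _ _)

variable [Fintype τ]

lemma linearization_mulVec_apply [CommRing K] {q : ℕ} [NeZero q] (F : k →+* K)
    (f : Matrix ι τ (MvPolynomial σ K)) (y : τ → MvPolynomial σ k) (i) :
    (linearization q F f *ᵥ y) i =
      cartier q i.2.1 i.2.2 (∑ j, f i.1 j * expand q (map F (y j))) := by
  rw [map_sum]
  refine Finset.sum_congr rfl fun j _ => ?_
  rw [mul_comm (f i.1 j), cartier_expand_map_mul q i.2.1.2 i.2.2.2, mul_comm]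
  rfl

lemma linearization_mulVec_eq_zero_iff [CommRing K] {q : ℕ} [NeZero q] (F : k →+* K)
    (f : Matrix ι τ (MvPolynomial σ K)) (y : τ → MvPolynomial σ k) :
    linearization q F f *ᵥ y = 0 ↔ ∀ i, ∑ j, f i j * expand q (map F (y j)) = 0 := by
  refine ⟨fun h i => eq_zero_of_cartier_eq_zero (q := q) F fun π α hπ hα => ?_, fun h => ?_⟩
  · rw [← linearization_mulVec_apply F f y (i, ⟨π, hπ⟩, ⟨α, hα⟩), h, Pi.zero_apply]
  · funext i
    rw [linearization_mulVec_apply, h, map_zero, Pi.zero_apply]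

lemma expand_map_iterateFrobenius {R : Type*} [CommSemiring R] (p m : ℕ) [ExpChar R p]
    (f : MvPolynomial σ R) : expand (p ^ m) (map (iterateFrobenius R p m) f) = f ^ p ^ m := by
  rw [← map_expand, map_iterateFrobenius_expand]

end Linearization

lemma generator_bound_le {p : ℕ} (hp : 0 < p) (m n N₁ N₂ B : ℕ) :
    (2 * N₂ * (N₁ * B)) ^ 2 ^ n ≤
      (2 * N₁ ^ 2 * N₂ * Nat.choose (B + n) n * p ^ (m * (n - 1)) * B) ^ 2 ^ n := by
  have hchoose : 0 < Nat.choose (B + n) n := Nat.choose_pos (Nat.le_add_left n B)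
  refine Nat.pow_le_pow_left ?_ _
  calc 2 * N₂ * (N₁ * B) ≤ 2 * N₂ * (N₁ ^ 2 * B) := by
        gcongr
        exact Nat.le_self_pow two_ne_zero N₁
    _ ≤ 2 * N₂ * (N₁ ^ 2 * B) * (Nat.choose (B + n) n * p ^ (m * (n - 1))) :=
        Nat.le_mul_of_pos_right _ (by positivity)
    _ = _ := by ring

end FrobeniusSystem

theorem frobenius_homogeneous_system_bounded_generators_general (p : ℕ) (k : Type*) [Field k]
    [ExpChar k p] (m n B : ℕ) {ι τ : Type*} [Fintype τ] (f : ι → τ → MvPolynomial (Fin n) k)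
    (hf : ∀ i j, (f i j).totalDegree ≤ B) (y : τ → MvPolynomial (Fin n) k)
    (hy : ∀ i, ∑ j, f i j * y j ^ p ^ m = 0) :
    y ∈ Submodule.span (MvPolynomial (Fin n) k)
      {y' : τ → MvPolynomial (Fin n) k |
        (∀ i, ∑ j, f i j * y' j ^ p ^ m = 0) ∧
        ∀ j, (y' j).totalDegree ≤ (2 * Fintype.card τ * B) ^ 2 ^ n} := by
  have : NeZero (p ^ m) := ⟨pow_ne_zero m (expChar_ne_zero k p)⟩
  let A := FrobeniusSystem.linearization (p ^ m) (iterateFrobenius k p m) f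
  have hA : ∀ z, A.mulVec z = 0 ↔ ∀ i, ∑ j, f i j * z j ^ p ^ m = 0 := fun z => by
    refine (FrobeniusSystem.linearization_mulVec_eq_zero_iff _ f z).trans ?_
    simp only [FrobeniusSystem.expand_map_iterateFrobenius]
  have hspan := FrobeniusSystem.solutionsSpannedIn_totalDegree_le
    (FrobeniusSystem.totalDegree_linearization_le hf) y ((hA y).2 hy)
  refine Submodule.span_mono ?_ hspan
  rintro z ⟨hz, hdeg⟩
  refine ⟨(hA z).1 hz, fun j => (hdeg j).trans ?_⟩
  grw [Matrix.rank_le_card_width]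

/-- In characteristic `p`, every solution of the homogeneous system
`∑ⱼ f_{ij}·Yⱼ^(p^m) = 0` over `k[x₁,…,xₙ]` is a `k[x₁,…,xₙ]`-linear combination of
solutions of total degree at most `(2·N₁²·N₂·C(B+n,n)·p^(m(n−1))·B)^(2^n)`. -/
theorem frobenius_homogeneous_system_bounded_generators
    (p : ℕ) (hp : p.Prime) (k : Type*) [Field k] [CharP k p]
    (m n N₁ N₂ B : ℕ)
    (f : Fin N₁ → Fin N₂ → MvPolynomial (Fin n) k)
    (hf : ∀ i j, (f i j).totalDegree ≤ B)
    (y : Fin N₂ → MvPolynomial (Fin n) k)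
    (hy : ∀ i, ∑ j, f i j * y j ^ p ^ m = 0) :
    y ∈ Submodule.span (MvPolynomial (Fin n) k)
      {y' : Fin N₂ → MvPolynomial (Fin n) k |
        (∀ i, ∑ j, f i j * y' j ^ p ^ m = 0) ∧
        ∀ j, (y' j).totalDegree ≤
          (2 * N₁ ^ 2 * N₂ * Nat.choose (B + n) n * p ^ (m * (n - 1)) * B) ^ 2 ^ n} := by
  have : ExpChar k p := .prime hp
  -- Weakening the bound `B` to `N₁ * B` makes the final estimate hold also for `N₁ = 0`.
  have hspan := frobenius_homogeneous_system_bounded_generators_general p k m n (N₁ * B) f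
    (fun i j => (hf i j).trans (Nat.le_mul_of_pos_left B i.pos)) y hy
  rw [Fintype.card_fin] at hspan
  refine Submodule.span_mono ?_ hspan
  exact fun z hz => ⟨hz.1, fun j => (hz.2 j).trans (FrobeniusSystem.generator_bound_le hp.pos ..)⟩
end

section
/- Let n ≥ 1 and D be natural numbers, and let S be a set of vectors in ℕ^n such that every v ∈ S satisfies v_1 + v_2 + … + v_n ≤ D, and for any two distinct u, v ∈ S it is not the case that u_i ≤ v_i for all i (i.e., no element of S divides another when the vectors are viewed as exponent vectors of monomials). Then S is finite and has cardinality at most (D+1)^(n−1). -/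
/-! Two vectors that differ in at most one coordinate are comparable, so an antichain embeds into
the product of the remaining coordinates. For exponent vectors of total degree at most `D`, each
of these `n - 1` coordinates takes values in `{0, …, D}`. -/

theorem le_or_ge_of_forall_ne_eq {ι : Type*} {α : ι → Type*} [∀ i, Preorder (α i)] {i₀ : ι}
    [Std.Total (α := α i₀) (· ≤ ·)] {u v : ∀ i, α i} (h : ∀ i ≠ i₀, u i = v i) :
    u ≤ v ∨ v ≤ u := by
  refine (total_of (· ≤ ·) (u i₀) (v i₀)).imp (fun h₀ i => ?_) (fun h₀ i => ?_)
  · rcases eq_or_ne i i₀ with rfl | hi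
    exacts [h₀, (h i hi).le]
  · rcases eq_or_ne i i₀ with rfl | hi
    exacts [h₀, (h i hi).ge]

theorem injOn_domRestrict_compl_singleton_of_isAntichain {ι : Type*} {α : ι → Type*}
    [∀ i, Preorder (α i)] (i₀ : ι) [Std.Total (α := α i₀) (· ≤ ·)]
    {S : Set (∀ i, α i)} (hS : IsAntichain (· ≤ ·) S) :
    Set.InjOn (Set.domRestrict (π := α) {i₀}ᶜ) S := by
  intro u hu v hv huv
  have h_eq : ∀ i ≠ i₀, u i = v i := fun i hi => congrFun huv ⟨i, hi⟩
  rcases le_or_ge_of_forall_ne_eq h_eq with h | h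
  exacts [hS.eq hu hv h, hS.eq' hu hv h]

theorem monomial_antichain_card_bound_general {ι : Type*} [Fintype ι] [DecidableEq ι]
    {α : ι → Type*} [∀ i, Preorder (α i)] (i₀ : ι) [Std.Total (α := α i₀) (· ≤ ·)]
    {S : Set (∀ i, α i)} (hS : IsAntichain (· ≤ ·) S) (t : ∀ i, Finset (α i))
    (ht : ∀ v ∈ S, ∀ i ≠ i₀, v i ∈ t i) :
    S.Finite ∧ S.ncard ≤ ∏ i ∈ {i₀}ᶜ, (t i).card := by
  let box := Fintype.piFinset fun i : ({i₀}ᶜ : Set ι) => t i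
  have h_maps : Set.MapsTo (Set.domRestrict (π := α) {i₀}ᶜ) S box := fun v hv =>
    Fintype.mem_piFinset.2 fun i => ht v hv i i.2
  have h_inj := injOn_domRestrict_compl_singleton_of_isAntichain i₀ hS
  refine ⟨.of_injOn h_maps h_inj box.finite_toSet, ?_⟩
  calc S.ncard ≤ (box : Set (∀ i : ({i₀}ᶜ : Set ι), α i)).ncard :=
        Set.ncard_le_ncard_of_injOn _ h_maps h_inj box.finite_toSet
    _ = box.card := Set.ncard_coe_finset box
    _ = ∏ i : ({i₀}ᶜ : Set ι), (t i).card := Fintype.card_piFinset _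
    _ = ∏ i ∈ {i₀}ᶜ, (t i).card := (Finset.prod_subtype _ (by simp) fun i => (t i).card).symm

/-- An antichain (under coordinatewise divisibility) of exponent vectors
in `ℕⁿ` of total degree at most `D` has at most `(D+1)^(n−1)` elements. -/
theorem monomial_antichain_card_bound
    (n D : ℕ) (hn : 1 ≤ n) (S : Set (Fin n → ℕ))
    (hdeg : ∀ v ∈ S, ∑ i, v i ≤ D)
    (hanti : ∀ u ∈ S, ∀ v ∈ S, u ≠ v → ¬ ∀ i, u i ≤ v i) :
    S.Finite ∧ S.ncard ≤ (D + 1) ^ (n - 1) := by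
  have h_coord : ∀ v ∈ S, ∀ i, v i ≤ D := fun v hv i =>
    (Finset.single_le_sum_of_canonicallyOrdered (Finset.mem_univ i)).trans (hdeg v hv)
  simpa [Finset.card_compl] using monomial_antichain_card_bound_general ⟨0, hn⟩ hanti
    (fun _ => Finset.Iic D) fun v hv i _ => Finset.mem_Iic.2 (h_coord v hv i)
end

section
/- Let k be a field, n ≥ 1 and d ≥ 1 natural numbers, let I be a nonzero ideal of k[x_1,…,x_n] generated by polynomials of total degree at most d, and let f be a nonzero polynomial of total degree at most d. Then the quotient ideal I : (f) = {g ∈ k[x_1,…,x_n] : f·g ∈ I} is generated by polynomials of total degree at most 2·(d+1)^(2^(n+1)). -/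
/-!
If `f₁, …, fₛ` generate `I`, the elements of `I : (f)` are the first entries of the syzygies of the
row `(f, f₁, …, fₛ)`. So it suffices to generate the syzygies of a matrix `A` in a degree that
depends on the number of rows and the degrees of the entries, but not on the number of columns. This
is Hermann's method, an induction on the number of variables.

Let the entries of `A` have degree at most `d`, and let `M` bound `d` times the number of rows. Take
a nonzero minor `Δ` of maximal size; its degree is at most `M`. Over an infinite field a linear
change of coordinates makes `Δ` monic up to a unit in the first variable. Cramer's rule gives
syzygies of degree at most `M`, with `Δ` in one position outside the minor and zeros in the others.
Reducing a syzygy modulo these makes its entries outside the minor of smaller degree than `Δ` in the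
first variable, and by Cramer's rule again all its entries then have degree less than `M` in that
variable. The coefficients of such a syzygy solve a linear system in one variable less, still of
degree at most `d`, with `M + d` times as many rows. Hence the bound `B` satisfies `B 0 M = 0` and
`B (n + 1) M = M + B n (M * (M + d))`, so that `B n d ≤ (2 * d) ^ 2 ^ n ≤ (d + 1) ^ 2 ^ (n + 1)`.

For an arbitrary field `k` the bound is obtained over the algebraic closure and descends to `k` by
applying `k`-linear functionals to the coefficients.
-/

open MvPolynomial Matrix
open scoped Polynomial

/-! ### Syzygies and maximal minors -/

section Syzygies

/-- The syzygies of the columns of `A`. -/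
abbrev syzygies {R ι κ : Type*} [CommRing R] [Fintype κ] (A : Matrix ι κ R) :
    Submodule R (κ → R) :=
  LinearMap.ker A.mulVecLin

theorem comp_mem_syzygies_map {R S ι κ : Type*} [CommRing R] [CommRing S] [Fintype κ]
    {A : Matrix ι κ R} {v : κ → R} (h : v ∈ syzygies A) (f : R →+* S) :
    f ∘ v ∈ syzygies (A.map f) := by
  ext i
  have := congrArg f (congrFun h i)
  simpa [RingHom.map_mulVec] using this

end Syzygies

section Minors

variable {R ι κ ρ : Type*} [CommRing R]

theorem mul_one_submatrix [Fintype κ] [DecidableEq κ] (B : Matrix ι κ R) (b : ρ → κ) :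
    B * (1 : Matrix κ κ R).submatrix id b = B.submatrix id b :=
  mul_submatrix_one (Equiv.refl κ) b B

variable [Fintype ρ] [DecidableEq ρ]

-- Column operations clear the upper right block.
theorem det_fromBlocks_mul_det_pow {τ : Type*} [Fintype τ] [DecidableEq τ]
    (M : Matrix ρ ρ R) (B : Matrix ρ τ R) (C : Matrix τ ρ R) (D : Matrix τ τ R) :
    (fromBlocks M B C D).det * M.det ^ Fintype.card τ =
      M.det * (M.det • D - C * (M.adjugate * B)).det := by
  have hmul : fromBlocks M B C D * fromBlocks 1 (-(M.adjugate * B)) 0 (M.det • 1) =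
      fromBlocks M 0 C (M.det • D - C * (M.adjugate * B)) := by
    rw [fromBlocks_multiply]
    congr 1
    · simp
    · rw [Matrix.mul_neg, ← Matrix.mul_assoc, mul_adjugate]; simp
    · simp
    · simp [sub_eq_neg_add]
  simpa using congrArg det hmul

theorem injective_of_det_submatrix_ne_zero {A : Matrix ι κ R} {a : ρ → ι} {b : ρ → κ}
    (h : (A.submatrix a b).det ≠ 0) : Function.Injective a := by
  intro s t hst
  by_contra hne
  exact h (det_zero_of_row_eq hne (by ext j; simp [hst]))

/-- The coefficients which Cramer's rule provides for writing `det (A.submatrix a b)` times the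
columns of `A` as combinations of the columns selected by `b`. -/
def cramerCoeffs (A : Matrix ι κ R) (a : ρ → ι) (b : ρ → κ) : Matrix ρ κ R :=
  (A.submatrix a b).adjugate * A.submatrix a id

theorem cramerCoeffs_submatrix (A : Matrix ι κ R) (a : ρ → ι) (b : ρ → κ) :
    (cramerCoeffs A a b).submatrix id b = (A.submatrix a b).det • 1 :=
  adjugate_mul (A.submatrix a b)

theorem cramerCoeffs_apply (A : Matrix ι κ R) (a : ρ → ι) (b : ρ → κ) (s : ρ) (j : κ) :
    cramerCoeffs A a b s j = ((A.submatrix a b).updateCol s fun t => A (a t) j).det := by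
  rw [← cramer_apply, cramer_eq_adjugate_mulVec]
  rfl

theorem det_smul_eq_mul_cramerCoeffs [IsDomain R] {A : Matrix ι κ R} {a : ρ → ι} {b : ρ → κ}
    (hdet : (A.submatrix a b).det ≠ 0)
    (hbordered : ∀ i j, (A.submatrix (Sum.elim a fun _ : Unit => i)
      (Sum.elim b fun _ : Unit => j)).det = 0) :
    (A.submatrix a b).det • A = A.submatrix id b * cramerCoeffs A a b := by
  ext i j
  have hblocks : A.submatrix (Sum.elim a fun _ : Unit => i) (Sum.elim b fun _ : Unit => j) =
      fromBlocks (A.submatrix a b) (A.submatrix a fun _ => j) (A.submatrix (fun _ => i) b)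
        (A.submatrix (fun _ => i) fun _ => j) := by
    ext (s | s) (t | t) <;> rfl
  have h := det_fromBlocks_mul_det_pow (A.submatrix a b) (A.submatrix a fun _ : Unit => j)
    (A.submatrix (fun _ : Unit => i) b) (A.submatrix (fun _ => i) fun _ => j)
  rw [← hblocks, hbordered, zero_mul] at h
  have hzero := (mul_eq_zero.mp h.symm).resolve_left hdet
  rw [det_unique, Matrix.sub_apply, sub_eq_zero] at hzero
  exact hzero

theorem exists_maximal_minor [IsDomain R] [Fintype ι] (A : Matrix ι κ R) :
    ∃ (r : ℕ) (a : Fin r → ι) (b : Fin r → κ), r ≤ Fintype.card ι ∧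
      (A.submatrix a b).det ≠ 0 ∧
      (A.submatrix a b).det • A = A.submatrix id b * cramerCoeffs A a b := by
  classical
  let HasMinor (r : ℕ) : Prop :=
    ∃ (a : Fin r → ι) (b : Fin r → κ), (A.submatrix a b).det ≠ 0
  have hzero : HasMinor 0 := ⟨Fin.elim0, Fin.elim0, by simp⟩
  have hle (r : ℕ) : HasMinor r → r ≤ Fintype.card ι := by
    rintro ⟨a, b, h⟩
    simpa using Fintype.card_le_of_injective a (injective_of_det_submatrix_ne_zero h)
  obtain ⟨r, ⟨a, b, hab⟩, hmax⟩ : ∃ r, HasMinor r ∧ ¬ HasMinor (r + 1) := by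
    refine ⟨_, Nat.findGreatest_spec (Nat.zero_le (Fintype.card ι)) hzero, fun h => ?_⟩
    have := Nat.le_findGreatest (hle _ h) h
    omega
  refine ⟨r, a, b, hle r ⟨a, b, hab⟩, hab, det_smul_eq_mul_cramerCoeffs hab fun i j => ?_⟩
  by_contra h
  let e : Fin (r + 1) ≃ Fin r ⊕ Unit := Fintype.equivOfCardEq (by simp)
  refine hmax ⟨Sum.elim a (fun _ => i) ∘ e, Sum.elim b (fun _ => j) ∘ e, ?_⟩
  rwa [← submatrix_submatrix, det_submatrix_equiv_self]

variable [DecidableEq κ]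

/-- The `j`-th column expresses, by Cramer's rule, `det (A.submatrix a b)` times the `j`-th column
of `A` by the columns selected by `b`. The columns are syzygies of `A` if the minor is maximal, and
they vanish in the positions selected by `b`. -/
def cramerSyzygies (A : Matrix ι κ R) (a : ρ → ι) (b : ρ → κ) : Matrix κ κ R :=
  (A.submatrix a b).det • 1 - (1 : Matrix κ κ R).submatrix id b * cramerCoeffs A a b

variable (A : Matrix ι κ R) (a : ρ → ι) (b : ρ → κ)

theorem cramerSyzygies_map {S : Type*} [CommRing S] (f : R →+* S) :
    (cramerSyzygies A a b).map f = cramerSyzygies (A.map f) a b := by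
  have hadj : ((A.map f).submatrix a b).adjugate = (A.submatrix a b).adjugate.map f :=
    (f.map_adjugate _).symm
  have hcoeffs : cramerCoeffs (A.map f) a b = (cramerCoeffs A a b).map f := by
    rw [cramerCoeffs, hadj, cramerCoeffs, Matrix.map_mul]
    rfl
  have hdet : ((A.map f).submatrix a b).det = f (A.submatrix a b).det := (f.map_det _).symm
  rw [cramerSyzygies, cramerSyzygies, hdet, hcoeffs]
  ext i j
  simp [Matrix.mul_apply, Matrix.one_apply, apply_ite f]

theorem cramerSyzygies_apply_eq_zero (i : κ) (s : ρ) : cramerSyzygies A a b i (b s) = 0 := by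
  have h (t : ρ) : cramerCoeffs A a b t (b s) = (A.submatrix a b).det * (1 : Matrix ρ ρ R) t s :=
    congrFun₂ (cramerCoeffs_submatrix A a b) t s
  simp [cramerSyzygies, Matrix.mul_apply, h, Matrix.one_apply]

variable [Fintype κ]

theorem mul_cramerSyzygies
    (hminor : (A.submatrix a b).det • A = A.submatrix id b * cramerCoeffs A a b) :
    A * cramerSyzygies A a b = 0 := by
  rw [cramerSyzygies, Matrix.mul_sub, ← Matrix.mul_assoc, mul_one_submatrix, ← hminor]
  simp

theorem cramerSyzygies_mul_self :
    cramerSyzygies A a b * cramerSyzygies A a b =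
      (A.submatrix a b).det • cramerSyzygies A a b := by
  have h : cramerCoeffs A a b * cramerSyzygies A a b = 0 := by
    rw [cramerSyzygies, Matrix.mul_sub, ← Matrix.mul_assoc, mul_one_submatrix,
      cramerCoeffs_submatrix]
    simp
  nth_rewrite 1 [cramerSyzygies]
  rw [Matrix.sub_mul, Matrix.mul_assoc, h]
  simp

theorem cramerSyzygies_mulVec {v : κ → R} (hv : v ∈ syzygies A) :
    cramerSyzygies A a b *ᵥ v = (A.submatrix a b).det • v := by
  have h : cramerCoeffs A a b *ᵥ v = 0 := by
    have hrows : A.submatrix a id *ᵥ v = 0 := funext fun s => congrFun hv (a s)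
    rw [cramerCoeffs, ← mulVec_mulVec, hrows, mulVec_zero]
  rw [cramerSyzygies, sub_mulVec, ← mulVec_mulVec, h]
  simp [smul_mulVec]

theorem cramerSyzygies_mulVec_apply {i : κ} (hi : i ∉ Set.range b) (q : κ → R) :
    (cramerSyzygies A a b *ᵥ q) i = (A.submatrix a b).det * q i := by
  have hrow : cramerSyzygies A a b i = Pi.single i (A.submatrix a b).det := by
    have hb (s : ρ) : i ≠ b s := fun h => hi ⟨s, h.symm⟩
    ext j
    simp [cramerSyzygies, Matrix.mul_apply, Matrix.one_apply, hb, Pi.single_apply, eq_comm]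
  rw [mulVec, hrow, single_dotProduct]

end Minors

section Degrees

variable {σ τ R ι κ ρ : Type*}

section
variable [CommRing R] [Fintype ρ] [DecidableEq ρ] {d : ℕ}

theorem totalDegree_det_le_s10 {N : Matrix ρ ρ (MvPolynomial σ R)}
    (hN : ∀ i j, (N i j).totalDegree ≤ d) : N.det.totalDegree ≤ Fintype.card ρ * d := by
  rw [Matrix.det_apply]
  refine totalDegree_finsetSum_le fun p _ => ?_
  refine (totalDegree_smul_le _ _).trans ((totalDegree_finsetProd _ _).trans ?_)
  refine (Finset.sum_le_card_nsmul _ _ d fun i _ => hN _ _).trans ?_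
  simp

theorem totalDegree_cramerSyzygies_le [DecidableEq κ]
    {A : Matrix ι κ (MvPolynomial σ R)} (hA : ∀ i j, (A i j).totalDegree ≤ d)
    (a : ρ → ι) (b : ρ → κ) (i j : κ) :
    (cramerSyzygies A a b i j).totalDegree ≤ Fintype.card ρ * d := by
  have hcoeffs (s : ρ) : (cramerCoeffs A a b s j).totalDegree ≤ Fintype.card ρ * d := by
    rw [cramerCoeffs_apply]
    refine totalDegree_det_le_s10 fun t u => ?_
    rw [updateCol_apply]
    split_ifs <;> exact hA _ _
  have hdet : (A.submatrix a b).det.totalDegree ≤ Fintype.card ρ * d :=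
    totalDegree_det_le_s10 fun _ _ => hA _ _
  rw [cramerSyzygies, Matrix.sub_apply, Matrix.smul_apply, Matrix.mul_apply]
  refine (totalDegree_sub _ _).trans (max_le ?_ (totalDegree_finsetSum_le fun s _ => ?_))
  · refine (totalDegree_mul _ _).trans ?_
    rw [Matrix.one_apply]
    split_ifs <;> simpa using hdet
  · refine (totalDegree_mul _ _).trans ?_
    rw [submatrix_apply, Matrix.one_apply]
    split_ifs <;> simpa using hcoeffs s
end

theorem totalDegree_aeval_le [CommSemiring R] {g : σ → MvPolynomial τ R}
    (hg : ∀ i, (g i).totalDegree ≤ 1) (p : MvPolynomial σ R) :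
    (aeval g p).totalDegree ≤ p.totalDegree := by
  rw [aeval_def, eval₂_eq]
  refine totalDegree_finsetSum_le fun m hm => ?_
  refine (totalDegree_mul _ _).trans ?_
  refine le_trans ?_ (le_totalDegree hm)
  rw [algebraMap_eq, totalDegree_C, zero_add, Finsupp.sum]
  refine (totalDegree_finsetProd _ _).trans (Finset.sum_le_sum fun i _ => ?_)
  refine (totalDegree_pow _ _).trans ?_
  simpa using Nat.mul_le_mul_left (m i) (hg i)

end Degrees

/-! ### Reduction of one variable -/

section Elimination

variable {R ι κ ρ : Type*} [CommRing R]

theorem exists_eq_mul_add_degree_lt [Nontrivial R] (p : R[X]) {q : R[X]}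
    (hq : IsUnit q.leadingCoeff) : ∃ c r, p = q * c + r ∧ r.degree < q.degree := by
  have hm := Polynomial.monic_of_isUnit_leadingCoeff_inv_smul hq
  refine ⟨Polynomial.C (↑hq.unit⁻¹ : R) * (p /ₘ (hq.unit⁻¹ • q)), p %ₘ (hq.unit⁻¹ • q), ?_, ?_⟩
  · nth_rewrite 1 [← Polynomial.modByMonic_add_div p (hq.unit⁻¹ • q)]
    rw [Units.smul_def, Polynomial.smul_eq_C_mul]
    ring
  · refine (Polynomial.degree_modByMonic_lt p hm).trans_le ?_
    rw [Units.smul_def]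
    exact Polynomial.degree_smul_le _ _

theorem degree_mul_lt_add {p q : R[X]} {a : ℕ} {b : WithBot ℕ}
    (hp : p.natDegree ≤ a) (hq : q.degree < b) : (p * q).degree < a + b := by
  calc (p * q).degree ≤ p.degree + q.degree := Polynomial.degree_mul_le p q
    _ ≤ a + q.degree := by gcongr; exact Polynomial.degree_le_of_natDegree_le hp
    _ < a + b := WithBot.add_lt_add_left (WithBot.natCast_ne_bot a) hq

-- Division by the minor `Δ` makes the entries of `v` outside the minor of smaller degree than `Δ`.
-- Then Cramer's rule bounds the degrees of the other entries.
theorem exists_degree_sub_cramerSyzygies_mulVec_lt [IsDomain R] [Fintype κ] [DecidableEq κ]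
    [Fintype ρ] [DecidableEq ρ] {A : Matrix ι κ R[X]} {a : ρ → ι} {b : ρ → κ} {M : ℕ}
    (hunit : IsUnit (A.submatrix a b).det.leadingCoeff)
    (hdeg : ∀ i j, (cramerSyzygies A a b i j).natDegree ≤ M)
    {v : κ → R[X]} (hv : v ∈ syzygies A) :
    ∃ q, ∀ j, ((v - cramerSyzygies A a b *ᵥ q) j).degree < M := by
  set U := cramerSyzygies A a b
  set Δ := (A.submatrix a b).det
  have hΔ : Δ.degree = Δ.natDegree :=
    Polynomial.degree_eq_natDegree (Polynomial.leadingCoeff_ne_zero.mp hunit.ne_zero)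
  choose q r hqr hr using fun j => exists_eq_mul_add_degree_lt (v j) hunit
  set w := v - U *ᵥ q with hw
  have hUw : U *ᵥ w = Δ • w := by
    rw [hw, mulVec_sub, cramerSyzygies_mulVec A a b hv, mulVec_mulVec,
      cramerSyzygies_mul_self, smul_mulVec, smul_sub]
  have houtside : ∀ j ∉ Set.range b, (w j).degree < Δ.degree := by
    intro j hj
    have hwr : w j = r j := by
      rw [hw, Pi.sub_apply, cramerSyzygies_mulVec_apply A a b hj, sub_eq_iff_eq_add', ← hqr]
    exact hwr ▸ hr j
  refine ⟨q, fun i => ?_⟩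
  have hsum : Δ * w i = ∑ j, U i j * w j := (congrFun hUw i).symm
  have hmem : Δ * w i ∈ Polynomial.degreeLT R (M + Δ.natDegree) := by
    rw [hsum]
    refine Submodule.sum_mem _ fun j _ => ?_
    by_cases hj : j ∈ Set.range b
    · obtain ⟨s, rfl⟩ := hj
      have hcol : U i (b s) = 0 := cramerSyzygies_apply_eq_zero A a b i s
      rw [hcol, zero_mul]
      exact zero_mem _
    · rw [Polynomial.mem_degreeLT, Nat.cast_add, ← hΔ]
      exact degree_mul_lt_add (hdeg i j) (houtside j hj)
  rw [Polynomial.mem_degreeLT, Polynomial.degree_mul, Nat.cast_add, add_comm, hΔ] at hmem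
  exact lt_of_add_lt_add_right hmem

/-- The linear system which expresses the vanishing of the first `N` coefficients of `A *ᵥ v` by
the coefficients of a vector `v` of polynomials of degree less than `M`. -/
noncomputable def coeffMatrix (A : Matrix ι κ R[X]) (N M : ℕ) :
    Matrix (ι × Fin N) (κ × Fin M) R :=
  of fun x y => (A x.1 y.1 * Polynomial.X ^ (y.2 : ℕ)).coeff x.2

/-- The vector of polynomials of degree less than `M` with coefficients `w`. -/
noncomputable def ofCoeffs {M : ℕ} (w : κ × Fin M → R) (j : κ) : R[X] :=
  ∑ t : Fin M, Polynomial.C (w (j, t)) * Polynomial.X ^ (t : ℕ)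

theorem coeff_ofCoeffs {M : ℕ} (w : κ × Fin M → R) (j : κ) (e : ℕ) :
    (ofCoeffs w j).coeff e = if h : e < M then w (j, ⟨e, h⟩) else 0 := by
  simp only [ofCoeffs, Polynomial.finsetSum_coeff, Polynomial.coeff_C_mul_X_pow]
  split_ifs with h
  · rw [Fintype.sum_eq_single ⟨e, h⟩ fun t ht => if_neg fun h => ht (Fin.ext h.symm), if_pos rfl]
  · exact Finset.sum_eq_zero fun t _ => if_neg (by omega)

theorem degree_ofCoeffs_lt {M : ℕ} (w : κ × Fin M → R) (j : κ) : (ofCoeffs w j).degree < M := by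
  rw [Polynomial.degree_lt_iff_coeff_zero]
  intro e he
  rw [coeff_ofCoeffs, dif_neg he.not_gt]

theorem ofCoeffs_coeff {M : ℕ} {v : κ → R[X]} (hv : ∀ j, (v j).degree < M) :
    ofCoeffs (fun y : κ × Fin M => (v y.1).coeff y.2) = v := by
  ext j e
  rw [coeff_ofCoeffs]
  split_ifs with h
  · rfl
  · exact (Polynomial.coeff_eq_zero_of_degree_lt
      ((hv j).trans_le (by exact_mod_cast not_lt.mp h))).symm

theorem coeff_mulVec_ofCoeffs [Fintype κ] (A : Matrix ι κ R[X]) {N M : ℕ} (w : κ × Fin M → R)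
    (i : ι) (e : Fin N) :
    ((A *ᵥ ofCoeffs w) i).coeff e = (coeffMatrix A N M *ᵥ w) (i, e) := by
  simp only [mulVec, dotProduct, coeffMatrix, of_apply, ofCoeffs, Polynomial.finsetSum_coeff,
    Finset.mul_sum, Fintype.sum_prod_type]
  refine Finset.sum_congr rfl fun j _ => Finset.sum_congr rfl fun t _ => ?_
  rw [mul_left_comm, Polynomial.coeff_C_mul, mul_comm]

theorem mulVec_ofCoeffs_eq_zero_iff [Fintype κ] {A : Matrix ι κ R[X]} {d : ℕ}
    (hA : ∀ i j, (A i j).natDegree ≤ d) {M : ℕ} (w : κ × Fin M → R) :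
    A *ᵥ ofCoeffs w = 0 ↔ coeffMatrix A (M + d) M *ᵥ w = 0 := by
  refine ⟨fun h => funext fun x => ?_, fun h => funext fun i => Polynomial.ext fun e => ?_⟩
  · rw [← coeff_mulVec_ofCoeffs, h, Pi.zero_apply, Pi.zero_apply, Polynomial.coeff_zero]
  rcases lt_or_ge e (M + d) with he | he
  · exact (coeff_mulVec_ofCoeffs A w i ⟨e, he⟩).trans (congrFun h _)
  · rw [mulVec, dotProduct, Polynomial.finsetSum_coeff, Pi.zero_apply, Polynomial.coeff_zero]
    refine Finset.sum_eq_zero fun j _ => Polynomial.coeff_eq_zero_of_degree_lt ?_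
    refine (degree_mul_lt_add (hA i j) (degree_ofCoeffs_lt w j)).trans_le ?_
    exact_mod_cast add_comm d M ▸ he

end Elimination

section RespectsTotalDegree

variable {σ τ R : Type*} [CommSemiring R]

/-- The ring isomorphism `ψ` between polynomials and univariate polynomials with polynomial
coefficients respects total degrees: the total degree of `p` is the largest `t + deg a` for a term
`a * X ^ t` of `ψ p`. The coordinate changes used to split off one variable have this property. -/
def RespectsTotalDegree (ψ : MvPolynomial σ R ≃+* (MvPolynomial τ R)[X]) : Prop :=
  ∀ p D, p.totalDegree ≤ D ↔ ∀ t, (ψ p).coeff t ≠ 0 → ((ψ p).coeff t).totalDegree + t ≤ D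

namespace RespectsTotalDegree

variable {ψ : MvPolynomial σ R ≃+* (MvPolynomial τ R)[X]} (hψ : RespectsTotalDegree ψ)
include hψ

theorem totalDegree_coeff_add_le {p : MvPolynomial σ R} {t : ℕ} (h : (ψ p).coeff t ≠ 0) :
    ((ψ p).coeff t).totalDegree + t ≤ p.totalDegree :=
  (hψ p _).mp le_rfl t h

theorem totalDegree_coeff_le (p : MvPolynomial σ R) (t : ℕ) :
    ((ψ p).coeff t).totalDegree ≤ p.totalDegree := by
  by_cases h : (ψ p).coeff t = 0
  · simp [h]
  · exact le_of_add_le_left (hψ.totalDegree_coeff_add_le h)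

theorem natDegree_le (p : MvPolynomial σ R) : (ψ p).natDegree ≤ p.totalDegree :=
  Polynomial.natDegree_le_iff_coeff_eq_zero.mpr fun t ht => by
    by_contra h
    exact (le_of_add_le_right (hψ.totalDegree_coeff_add_le h)).not_gt ht

end RespectsTotalDegree

theorem respectsTotalDegree_finSuccEquiv (n : ℕ) :
    RespectsTotalDegree (finSuccEquiv R n).toRingEquiv := by
  refine fun p D => ⟨fun h t ht => (totalDegree_coeff_finSuccEquiv_add_le p t ht).trans h,
    fun h => Finset.sup_le fun m hm => ?_⟩
  have hcoeff : coeff m.tail ((finSuccEquiv R n p).coeff (m 0)) ≠ 0 := by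
    rwa [finSuccEquiv_coeff_coeff, Finsupp.cons_tail, ← mem_support_iff]
  have ht := h (m 0) fun h0 => hcoeff (h0 ▸ coeff_zero _)
  have htail := le_totalDegree (mem_support_iff.mpr hcoeff)
  rw [Finsupp.sum_fintype _ _ (by simp)] at htail ⊢
  rw [Fin.sum_univ_succ]
  simp only [Finsupp.tail_apply] at htail
  change totalDegree ((finSuccEquiv R n p).coeff (m 0)) + m 0 ≤ D at ht
  omega

end RespectsTotalDegree

/-! ### Changes of coordinates -/

section Coordinates

theorem aeval_mul_of_isHomogeneous {σ R S : Type*} [CommSemiring R] [CommSemiring S]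
    [Algebra R S] {h : MvPolynomial σ R} {e : ℕ} (hh : h.IsHomogeneous e) (x : S) (y : σ → S) :
    aeval (fun i => x * y i) h = x ^ e * aeval y h := by
  simp only [aeval_def, eval₂_eq, mul_pow, Finset.prod_mul_distrib, Finset.mul_sum]
  refine Finset.sum_congr rfl fun m hm => ?_
  have hdeg : m.degree = e := by
    rw [Finsupp.degree_eq_weight_one]
    exact hh (mem_support_iff.mp hm)
  rw [Finset.prod_pow_eq_pow_sum, ← Finsupp.degree_apply, hdeg]
  ring

theorem coeff_aeval_line {σ R : Type*} [CommSemiring R] (p : σ → R) (q : MvPolynomial σ R)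
    (e : ℕ) : (aeval (fun i => Polynomial.X * Polynomial.C (p i)) q).coeff e =
      eval p (homogeneousComponent e q) := by
  have hcomp (i : ℕ) : aeval (fun i => Polynomial.X * Polynomial.C (p i))
      (homogeneousComponent i q) =
        Polynomial.X ^ i * Polynomial.C (eval p (homogeneousComponent i q)) := by
    rw [aeval_mul_of_isHomogeneous (homogeneousComponent_isHomogeneous i q)]
    congr 1
    exact aeval_algebraMap_apply R[X] p _
  nth_rewrite 1 [← sum_homogeneousComponent q]
  simp only [map_sum, hcomp, Polynomial.finsetSum_coeff, Polynomial.X_pow_mul_C,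
    Polynomial.coeff_C_mul_X_pow]
  rw [Finset.sum_ite_eq]
  split_ifs with he
  · rfl
  · rw [homogeneousComponent_eq_zero e q (by simpa using he), map_zero]

theorem exists_eval_cons_one_ne_zero {K : Type*} [Field K] [Infinite K] {n e : ℕ}
    {h : MvPolynomial (Fin (n + 1)) K} (hh : h.IsHomogeneous e) (h0 : h ≠ 0) :
    ∃ c : Fin n → K, eval (Fin.cons 1 c) h ≠ 0 := by
  obtain ⟨p, hp⟩ : ∃ p, eval p (h * X 0) ≠ 0 := by
    by_contra! hzero
    exact mul_ne_zero h0 (X_ne_zero 0) (MvPolynomial.funext fun x => by simpa using hzero x)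
  rw [eval_mul, eval_X, mul_ne_zero_iff] at hp
  refine ⟨fun i => (p 0)⁻¹ * p i.succ, ?_⟩
  have hcons : (Fin.cons 1 fun i => (p 0)⁻¹ * p i.succ : Fin (n + 1) → K) =
      fun i => (p 0)⁻¹ * p i := by
    refine funext (Fin.cases ?_ fun i => rfl)
    exact (inv_mul_cancel₀ hp.2).symm
  have hscale : eval (fun i => (p 0)⁻¹ * p i) h = (p 0)⁻¹ ^ e * eval p h :=
    aeval_mul_of_isHomogeneous hh (p 0)⁻¹ p
  rw [hcons, hscale]
  exact mul_ne_zero (pow_ne_zero _ (inv_ne_zero hp.2)) hp.1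

section Shear

variable {R : Type*} [CommRing R] {n : ℕ}

/-- The substitution that fixes the first variable and adds `c i` times it to the variable
`i + 1`. -/
noncomputable def shearHom (c : Fin n → R) :
    MvPolynomial (Fin (n + 1)) R →ₐ[R] MvPolynomial (Fin (n + 1)) R :=
  aeval (Fin.cons (X 0) fun i => X i.succ + C (c i) * X 0)

theorem shearHom_comp_neg (c : Fin n → R) :
    (shearHom c).comp (shearHom (-c)) = AlgHom.id R _ := by
  ext1 i
  refine Fin.cases ?_ (fun i => ?_) i <;> simp [shearHom, algHom_C]

theorem totalDegree_shearHom_le (c : Fin n → R) (p : MvPolynomial (Fin (n + 1)) R) :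
    (shearHom c p).totalDegree ≤ p.totalDegree := by
  cases subsingleton_or_nontrivial R
  · rw [Subsingleton.elim p 0, map_zero]
  refine totalDegree_aeval_le (Fin.cases ?_ fun i => ?_) p
  · simp
  · refine (totalDegree_add _ _).trans (max_le (by simp) ((totalDegree_mul _ _).trans ?_))
    simp

/-- `shearHom c` as a linear change of coordinates, with inverse `shearHom (-c)`. -/
noncomputable def shear (c : Fin n → R) :
    MvPolynomial (Fin (n + 1)) R ≃ₐ[R] MvPolynomial (Fin (n + 1)) R :=
  AlgEquiv.ofAlgHom (shearHom c) (shearHom (-c)) (shearHom_comp_neg c)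
    (by simpa using shearHom_comp_neg (-c))

theorem totalDegree_shear (c : Fin n → R) (p : MvPolynomial (Fin (n + 1)) R) :
    (shear c p).totalDegree = p.totalDegree := by
  refine (totalDegree_shearHom_le c p).antisymm ?_
  conv_lhs => rw [← (shear c).symm_apply_apply p]
  exact totalDegree_shearHom_le (-c) (shear c p)

theorem shear_X_zero (c : Fin n → R) : shear c (X 0) = X 0 := by
  simp [shear, shearHom]

theorem shear_X_succ (c : Fin n → R) (i : Fin n) :
    shear c (X i.succ) = X i.succ + C (c i) * X 0 := by
  simp [shear, shearHom]

theorem map_constantCoeff_finSuccEquiv_shear (c : Fin n → R) (q : MvPolynomial (Fin (n + 1)) R) :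
    (finSuccEquiv R n (shear c q)).map constantCoeff =
      aeval (fun i => Polynomial.X * Polynomial.C ((Fin.cons 1 c : Fin (n + 1) → R) i)) q := by
  induction q using MvPolynomial.induction_on with
  | C a =>
    rw [← algebraMap_eq, AlgEquiv.commutes, AlgEquiv.commutes, AlgHom.commutes]
    simp [Polynomial.algebraMap_apply, algebraMap_eq]
  | add p q hp hq => simp only [map_add, Polynomial.map_add, hp, hq]
  | mul_X q i hq =>
    rw [map_mul, map_mul, Polynomial.map_mul, hq, map_mul, aeval_X]
    refine congrArg (_ * ·) ?_
    obtain rfl | ⟨i, rfl⟩ := i.eq_zero_or_eq_succ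
    · simp [shear_X_zero, finSuccEquiv_X_zero]
    · simp [shear_X_succ, finSuccEquiv_apply, Polynomial.X_mul_C]

theorem constantCoeff_coeff_finSuccEquiv_shear (c : Fin n → R)
    (q : MvPolynomial (Fin (n + 1)) R) (e : ℕ) :
    constantCoeff ((finSuccEquiv R n (shear c q)).coeff e) =
      eval (Fin.cons 1 c) (homogeneousComponent e q) := by
  rw [← Polynomial.coeff_map, map_constantCoeff_finSuccEquiv_shear, coeff_aeval_line]

end Shear

theorem isUnit_leadingCoeff_of_respectsTotalDegree {σ τ K : Type*} [Field K]
    {ψ : MvPolynomial σ K ≃+* (MvPolynomial τ K)[X]} (hψ : RespectsTotalDegree ψ)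
    {p : MvPolynomial σ K} (hp : constantCoeff ((ψ p).coeff p.totalDegree) ≠ 0) :
    IsUnit (ψ p).leadingCoeff := by
  have hne : (ψ p).coeff p.totalDegree ≠ 0 := fun h => hp (by rw [h, map_zero])
  have hnat : (ψ p).natDegree = p.totalDegree :=
    (hψ.natDegree_le p).antisymm (Polynomial.le_natDegree_of_ne_zero hne)
  have hconst : ((ψ p).coeff p.totalDegree).totalDegree = 0 := by
    have := hψ.totalDegree_coeff_add_le hne
    omega
  rw [Polynomial.leadingCoeff, hnat, totalDegree_eq_zero_iff_eq_C.mp hconst]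
  exact (IsUnit.mk0 _ hp).map C

theorem homogeneousComponent_totalDegree_ne_zero {σ R : Type*} [CommSemiring R]
    {q : MvPolynomial σ R} (hq : q ≠ 0) : homogeneousComponent q.totalDegree q ≠ 0 := by
  obtain ⟨m, hm, hdeg⟩ := Finset.exists_mem_eq_sup q.support (support_nonempty.mpr hq)
    fun s => s.sum fun _ e => e
  refine ne_zero_iff.mpr ⟨m, ?_⟩
  have hdeg : m.degree = q.totalDegree := hdeg.symm
  rwa [coeff_homogeneousComponent, if_pos hdeg, ← mem_support_iff]

theorem exists_respectsTotalDegree_isUnit_leadingCoeff {K : Type*} [Field K] [Infinite K] {n : ℕ}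
    {q : MvPolynomial (Fin (n + 1)) K} (hq : q ≠ 0) :
    ∃ ψ : MvPolynomial (Fin (n + 1)) K ≃+* (MvPolynomial (Fin n) K)[X],
      RespectsTotalDegree ψ ∧ IsUnit (ψ q).leadingCoeff := by
  obtain ⟨c, hc⟩ := exists_eval_cons_one_ne_zero
    (homogeneousComponent_isHomogeneous q.totalDegree q)
    (homogeneousComponent_totalDegree_ne_zero hq)
  have hψ : RespectsTotalDegree ((shear c).trans (finSuccEquiv K n)).toRingEquiv := fun p D => by
    rw [← totalDegree_shear c p]
    exact respectsTotalDegree_finSuccEquiv n (shear c p) D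
  refine ⟨_, hψ, isUnit_leadingCoeff_of_respectsTotalDegree hψ ?_⟩
  rwa [← constantCoeff_coeff_finSuccEquiv_shear] at hc

end Coordinates

/-! ### Degree bounds for the generators of syzygies -/

section GeneratedInDegree

variable {σ τ R ι κ ρ : Type*} [CommRing R]

/-- The submodule of `N` generated by the elements of `N` all of whose entries have total degree at
most `D`. -/
noncomputable def spanDegreeLE (N : Submodule (MvPolynomial σ R) (κ → MvPolynomial σ R)) (D : ℕ) :
    Submodule (MvPolynomial σ R) (κ → MvPolynomial σ R) :=
  Submodule.span _ {v | v ∈ N ∧ ∀ j, (v j).totalDegree ≤ D}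

/-- `N` is generated by elements all of whose entries have total degree at most `D`. -/
def IsGeneratedInDegree (N : Submodule (MvPolynomial σ R) (κ → MvPolynomial σ R)) (D : ℕ) :
    Prop :=
  N ≤ spanDegreeLE N D

section

variable {N : Submodule (MvPolynomial σ R) (κ → MvPolynomial σ R)}

theorem mem_spanDegreeLE {D : ℕ} {v : κ → MvPolynomial σ R} (hv : v ∈ N)
    (hdeg : ∀ j, (v j).totalDegree ≤ D) : v ∈ spanDegreeLE N D :=
  Submodule.subset_span ⟨hv, hdeg⟩

theorem spanDegreeLE_le (D : ℕ) : spanDegreeLE N D ≤ N :=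
  Submodule.span_le.mpr fun _ hv => hv.1

theorem spanDegreeLE_mono {D D' : ℕ} (h : D ≤ D') : spanDegreeLE N D ≤ spanDegreeLE N D' :=
  Submodule.span_mono fun _ hv => ⟨hv.1, fun j => (hv.2 j).trans h⟩

end

theorem totalDegree_symm_ofCoeffs_le
    {ψ : MvPolynomial σ R ≃+* (MvPolynomial τ R)[X]} (hψ : RespectsTotalDegree ψ) {M D : ℕ}
    {w : κ × Fin M → MvPolynomial τ R}
    (hw : ∀ y, (w y).totalDegree ≤ D) (j : κ) :
    (ψ.symm (ofCoeffs w j)).totalDegree ≤ M + D := by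
  rw [hψ]
  intro t ht
  rw [RingEquiv.apply_symm_apply, coeff_ofCoeffs] at ht ⊢
  split_ifs at ht ⊢ with htM
  · exact (add_le_add (hw _) htM.le).trans_eq (add_comm D M)
  · exact absurd rfl ht

variable [Fintype κ]

theorem mulVec_mem_spanDegreeLE {A : Matrix ι κ (MvPolynomial σ R)}
    {U : Matrix κ κ (MvPolynomial σ R)} (hAU : A * U = 0) {D : ℕ}
    (hU : ∀ i j, (U i j).totalDegree ≤ D) (q : κ → MvPolynomial σ R) :
    U *ᵥ q ∈ spanDegreeLE (syzygies A) D := by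
  rw [mulVec_eq_sum]
  refine Submodule.sum_mem _ fun j _ => ?_
  rw [op_smul_eq_smul]
  exact Submodule.smul_mem _ (q j)
    (mem_spanDegreeLE (funext fun i => congrFun₂ hAU i j) fun i => hU i j)

variable {ψ : MvPolynomial σ R ≃+* (MvPolynomial τ R)[X]} (hψ : RespectsTotalDegree ψ)
  {A : Matrix ι κ (MvPolynomial σ R)} {d : ℕ} (hA : ∀ i j, (A i j).totalDegree ≤ d)
  {M D : ℕ} (hD : IsGeneratedInDegree (syzygies (coeffMatrix (A.map ψ) (M + d) M)) D)
include hψ hA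

theorem symm_comp_ofCoeffs_mem_syzygies {w : κ × Fin M → MvPolynomial τ R}
    (hw : w ∈ syzygies (coeffMatrix (A.map ψ) (M + d) M)) :
    ψ.symm ∘ ofCoeffs w ∈ syzygies A := by
  have hdeg (i : ι) (j : κ) : (A.map ψ i j).natDegree ≤ d := (hψ.natDegree_le _).trans (hA i j)
  have h := comp_mem_syzygies_map ((mulVec_ofCoeffs_eq_zero_iff hdeg w).mpr hw) ψ.symm.toRingHom
  have hA' : (A.map ψ).map ψ.symm.toRingHom = A := by
    ext1 i j
    exact ψ.symm_apply_apply (A i j)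
  rwa [hA'] at h

include hD

theorem mem_spanDegreeLE_of_degree_lt {v : κ → MvPolynomial σ R} (hv : v ∈ syzygies A)
    (hdeg : ∀ j, (ψ (v j)).degree < M) :
    v ∈ spanDegreeLE (syzygies A) (M + D) := by
  let θ : MvPolynomial τ R →+* MvPolynomial σ R := ψ.symm.toRingHom.comp Polynomial.C
  let L : (κ × Fin M → MvPolynomial τ R) →ₛₗ[θ] (κ → MvPolynomial σ R) :=
    { toFun w := ψ.symm ∘ ofCoeffs w
      map_add' w w' := by
        ext1 j
        simp [ofCoeffs, add_mul, Finset.sum_add_distrib]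
      map_smul' a w := by
        ext1 j
        simp [ofCoeffs, mul_assoc, Finset.mul_sum, θ] }
  let coeffs (y : κ × Fin M) : MvPolynomial τ R := (ψ (v y.1)).coeff y.2
  have hofCoeffs : ofCoeffs coeffs = ψ ∘ v := ofCoeffs_coeff (v := ψ ∘ v) hdeg
  have hcoeffs : coeffs ∈ syzygies (coeffMatrix (A.map ψ) (M + d) M) := by
    refine (mulVec_ofCoeffs_eq_zero_iff (fun i j => (hψ.natDegree_le _).trans (hA i j)) _).mp ?_
    rw [hofCoeffs]
    exact comp_mem_syzygies_map hv ψ.toRingHom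
  have hL : spanDegreeLE (syzygies (coeffMatrix (A.map ψ) (M + d) M)) D ≤
      (spanDegreeLE (syzygies A) (M + D)).comap L :=
    Submodule.span_le.mpr fun w hw => mem_spanDegreeLE
      (symm_comp_ofCoeffs_mem_syzygies hψ hA hw.1) (totalDegree_symm_ofCoeffs_le hψ hw.2)
  have hv : L coeffs = v := by
    ext1 j
    exact (congrArg ψ.symm (congrFun hofCoeffs j)).trans (ψ.symm_apply_apply (v j))
  exact hv ▸ hL (hD hcoeffs)

theorem isGeneratedInDegree_of_coeffMatrix [IsDomain R] [Fintype ρ] [DecidableEq ρ]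
    {a : ρ → ι} {b : ρ → κ}
    (hminor : (A.submatrix a b).det • A = A.submatrix id b * cramerCoeffs A a b)
    (hunit : IsUnit (ψ (A.submatrix a b).det).leadingCoeff) (hM : Fintype.card ρ * d ≤ M) :
    IsGeneratedInDegree (syzygies A) (M + D) := by
  classical
  intro v hv
  set U := cramerSyzygies A a b
  have hUψ : U.map ψ = cramerSyzygies (A.map ψ) a b := cramerSyzygies_map A a b ψ.toRingHom
  have hUdeg (i j : κ) : (U i j).totalDegree ≤ M :=
    (totalDegree_cramerSyzygies_le hA a b i j).trans hM
  have hUdeg' (i j : κ) : (cramerSyzygies (A.map ψ) a b i j).natDegree ≤ M :=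
    hUψ ▸ (hψ.natDegree_le (U i j)).trans (hUdeg i j)
  have hdet : ψ (A.submatrix a b).det = ((A.map ψ).submatrix a b).det := ψ.toRingHom.map_det _
  obtain ⟨q, hq⟩ := exists_degree_sub_cramerSyzygies_mulVec_lt (hdet ▸ hunit) hUdeg'
    (comp_mem_syzygies_map hv ψ.toRingHom)
  set u := U *ᵥ (ψ.symm ∘ q)
  have hψu (j : κ) : ψ (u j) = (cramerSyzygies (A.map ψ) a b *ᵥ q) j := by
    have hq : ψ ∘ ψ.symm ∘ q = q := funext fun j => ψ.apply_symm_apply (q j)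
    have h : ψ (u j) = (U.map ψ *ᵥ ψ ∘ ψ.symm ∘ q) j := ψ.toRingHom.map_mulVec U _ j
    rwa [hq, hUψ] at h
  have hu : u ∈ spanDegreeLE (syzygies A) M :=
    mulVec_mem_spanDegreeLE (mul_cramerSyzygies A a b hminor) hUdeg _
  have hvu := mem_spanDegreeLE_of_degree_lt hψ hA hD (sub_mem hv (spanDegreeLE_le M hu)) fun j => by
    rw [Pi.sub_apply, map_sub, hψu]
    exact hq j
  rw [← sub_add_cancel v u]
  exact add_mem hvu (spanDegreeLE_mono (Nat.le_add_right M D) hu)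

end GeneratedInDegree

/-! ### Hermann's bound over an infinite field -/

section InfiniteField

theorem totalDegree_coeffMatrix_le {σ τ R ι κ : Type*} [CommRing R]
    {ψ : MvPolynomial σ R ≃+* (MvPolynomial τ R)[X]} (hψ : RespectsTotalDegree ψ)
    {A : Matrix ι κ (MvPolynomial σ R)} {d : ℕ} (hA : ∀ i j, (A i j).totalDegree ≤ d) (N M : ℕ)
    (x : ι × Fin N) (y : κ × Fin M) : (coeffMatrix (A.map ψ) N M x y).totalDegree ≤ d := by
  rw [coeffMatrix, of_apply, Polynomial.coeff_mul_X_pow']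
  split_ifs
  · exact (hψ.totalDegree_coeff_le _ _).trans (hA _ _)
  · simp

/-- Degree bound for the syzygies of a matrix of degree at most `d` in `n` variables, where `M`
bounds `d` times the number of rows. Eliminating one variable multiplies the number of rows by
`M + d`. -/
def syzygyBound (d : ℕ) : ℕ → ℕ → ℕ
  | 0, _ => 0
  | n + 1, M => M + syzygyBound d n (M * (M + d))

-- The summand `2 * M` makes the induction close: it absorbs the `M` added at each elimination.
theorem syzygyBound_add_le {d M : ℕ} (hd : 1 ≤ d) (n : ℕ) (hM : d ≤ M) :
    syzygyBound d n M + 2 * M ≤ (2 * M) ^ 2 ^ n := by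
  induction n generalizing M with
  | zero => simp [syzygyBound]
  | succ n ih =>
    have hM' : d ≤ M * (M + d) := by nlinarith
    calc syzygyBound d (n + 1) M + 2 * M
        ≤ syzygyBound d n (M * (M + d)) + 2 * (M * (M + d)) := by
          rw [syzygyBound]
          nlinarith
      _ ≤ (2 * (M * (M + d))) ^ 2 ^ n := ih hM'
      _ ≤ ((2 * M) ^ 2) ^ 2 ^ n := Nat.pow_le_pow_left (by nlinarith) _
      _ = (2 * M) ^ 2 ^ (n + 1) := by rw [← pow_mul, ← pow_succ']

theorem syzygyBound_self_le {d : ℕ} (hd : 1 ≤ d) (n : ℕ) :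
    syzygyBound d n d ≤ (d + 1) ^ 2 ^ (n + 1) := by
  calc syzygyBound d n d ≤ syzygyBound d n d + 2 * d := Nat.le_add_right _ _
    _ ≤ (2 * d) ^ 2 ^ n := syzygyBound_add_le hd n le_rfl
    _ ≤ ((d + 1) ^ 2) ^ 2 ^ n := Nat.pow_le_pow_left (by nlinarith) _
    _ = (d + 1) ^ 2 ^ (n + 1) := by rw [← pow_mul, ← pow_succ']

theorem isGeneratedInDegree_syzygies_of_infinite {K ι κ : Type*} [Field K] [Infinite K]
    [Fintype ι] [Fintype κ] {n d M : ℕ} {A : Matrix ι κ (MvPolynomial (Fin n) K)}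
    (hA : ∀ i j, (A i j).totalDegree ≤ d) (hM : Fintype.card ι * d ≤ M) :
    IsGeneratedInDegree (syzygies A) (syzygyBound d n M) := by
  induction n generalizing ι κ M with
  | zero =>
    refine fun v hv => mem_spanDegreeLE hv fun j => ?_
    rw [eq_C_of_isEmpty (v j), totalDegree_C]
    exact Nat.zero_le _
  | succ n ih =>
    obtain ⟨r, a, b, hr, hdet, hminor⟩ := exists_maximal_minor A
    obtain ⟨ψ, hψ, hunit⟩ := exists_respectsTotalDegree_isUnit_leadingCoeff hdet
    have hrM : Fintype.card (Fin r) * d ≤ M := by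
      rw [Fintype.card_fin]
      exact (Nat.mul_le_mul_right d hr).trans hM
    have hrows : Fintype.card (ι × Fin (M + d)) * d ≤ M * (M + d) := by
      rw [Fintype.card_prod, Fintype.card_fin, mul_right_comm]
      exact Nat.mul_le_mul_right (M + d) hM
    exact isGeneratedInDegree_of_coeffMatrix hψ hA
      (ih (totalDegree_coeffMatrix_le hψ hA (M + d) M) hrows) hminor hunit hrM

end InfiniteField

/-! ### Descent of the base field -/

section BaseChange

attribute [local instance] algebraMvPolynomial

variable {σ k K ι κ : Type*} [CommRing k] [CommRing K] [Algebra k K]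

/-- Application of a `k`-linear functional on `K` to all coefficients of a polynomial over `K`. This
is linear over the polynomials with coefficients in `k`. -/
noncomputable def coeffwise (l : K →ₗ[k] k) :
    MvPolynomial σ K →ₗ[MvPolynomial σ k] MvPolynomial σ k where
  toFun := AddMonoidAlgebra.map l.toAddMonoidHom
  map_add' := AddMonoidAlgebra.map_add l.toAddMonoidHom
  map_smul' p q := by
    classical
    ext m
    change l (coeff m (map (algebraMap k K) p * q)) = coeff m (p * _)
    simp only [coeff_mul, coeff_map, ← Algebra.smul_def, map_sum, map_smul, smul_eq_mul]
    rfl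

theorem coeff_coeffwise (l : K →ₗ[k] k) (p : MvPolynomial σ K) (m : σ →₀ ℕ) :
    coeff m (coeffwise l p) = l (coeff m p) :=
  rfl

theorem totalDegree_coeffwise_le (l : K →ₗ[k] k) (p : MvPolynomial σ K) :
    (coeffwise l p).totalDegree ≤ p.totalDegree :=
  Finset.sup_mono fun m hm => by
    rw [mem_support_iff, coeff_coeffwise] at hm
    exact mem_support_iff.mpr fun h => hm (by rw [h, map_zero])

theorem coeffwise_monomial_mul (l : K →ₗ[k] k) (m : σ →₀ ℕ) (a : K) (p : MvPolynomial σ K) :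
    coeffwise l (monomial m a * p) = monomial m 1 * coeffwise (l ∘ₗ LinearMap.mulLeft k a) p := by
  classical
  have h : monomial m a * p = (monomial m 1 : MvPolynomial σ k) • (C a * p) := by
    rw [Algebra.smul_def, algebraMap_def, map_monomial, map_one, ← mul_assoc, mul_comm _ (C a),
      C_mul_monomial, mul_one]
  rw [h, map_smul, smul_eq_mul]
  congr 1
  ext e
  simp only [coeff_coeffwise, coeff_C_mul, LinearMap.comp_apply, LinearMap.mulLeft_apply]

variable [Fintype κ] {A : Matrix ι κ (MvPolynomial σ k)}

theorem coeffwise_compLeft_mem_syzygies {w : κ → MvPolynomial σ K}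
    (hw : w ∈ syzygies (A.map (map (algebraMap k K)))) (l : K →ₗ[k] k) :
    (coeffwise l).compLeft κ w ∈ syzygies A := by
  ext1 i
  have h : ∑ j, A i j • w j = 0 := congrFun hw i
  have hl := congrArg (coeffwise l) h
  simp only [map_sum, map_smul, map_zero] at hl
  exact hl

theorem coeffwise_compLeft_mem_spanDegreeLE {D : ℕ} {w : κ → MvPolynomial σ K}
    (hw : w ∈ spanDegreeLE (syzygies (A.map (map (algebraMap k K)))) D) (l : K →ₗ[k] k) :
    (coeffwise l).compLeft κ w ∈ spanDegreeLE (syzygies A) D := by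
  induction hw using Submodule.span_induction generalizing l with
  | mem w hw =>
    exact mem_spanDegreeLE (coeffwise_compLeft_mem_syzygies hw.1 l)
      fun j => (totalDegree_coeffwise_le l (w j)).trans (hw.2 j)
  | zero =>
    rw [map_zero]
    exact zero_mem _
  | add x y _ _ hx hy =>
    rw [map_add]
    exact add_mem (hx l) (hy l)
  | smul c x _ hx =>
    induction c using MvPolynomial.induction_on' with
    | monomial m a =>
      have h : (coeffwise l).compLeft κ (monomial m a • x) = (monomial m 1 : MvPolynomial σ k) •
          (coeffwise (l ∘ₗ LinearMap.mulLeft k a)).compLeft κ x :=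
        _root_.funext fun j => coeffwise_monomial_mul l m a (x j)
      exact h ▸ Submodule.smul_mem _ _ (hx _)
    | add p q hp hq =>
      rw [add_smul, map_add]
      exact add_mem hp hq

theorem IsGeneratedInDegree.of_baseChange {D : ℕ} {l : K →ₗ[k] k} (hl : l 1 = 1)
    (h : IsGeneratedInDegree (syzygies (A.map (map (algebraMap k K)))) D) :
    IsGeneratedInDegree (syzygies A) D := by
  intro v hv
  have hretract : (coeffwise l).compLeft κ (map (algebraMap k K) ∘ v) = v := by
    ext j m
    rw [LinearMap.compLeft_apply, Function.comp_apply, coeff_coeffwise, Function.comp_apply,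
      coeff_map, Algebra.algebraMap_eq_smul_one, map_smul, hl, smul_eq_mul, mul_one]
  exact hretract ▸ coeffwise_compLeft_mem_spanDegreeLE
    (h (comp_mem_syzygies_map hv (MvPolynomial.map (algebraMap k K)))) l

theorem isGeneratedInDegree_syzygies {k ι κ : Type*} [Field k] [Fintype ι] [Fintype κ]
    {n d M : ℕ} {A : Matrix ι κ (MvPolynomial (Fin n) k)} (hA : ∀ i j, (A i j).totalDegree ≤ d)
    (hM : Fintype.card ι * d ≤ M) : IsGeneratedInDegree (syzygies A) (syzygyBound d n M) := by
  obtain ⟨l, hl⟩ := Module.Projective.exists_dual_eq_one k (one_ne_zero (α := AlgebraicClosure k))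
  refine IsGeneratedInDegree.of_baseChange hl (isGeneratedInDegree_syzygies_of_infinite ?_ hM)
  exact fun i j => (Finset.sup_mono (support_map_subset _ _)).trans (hA i j)

end BaseChange

/-! ### Quotients of ideals -/

section Colon

variable {R ι : Type*} [CommRing R] [Fintype ι]

/-- The row with the entry `f` followed by the entries of `g`. The first entries of its syzygies
form the quotient of the ideal generated by `g` by `f`. -/
def colonRow (f : R) (g : ι → R) : Matrix Unit (Option ι) R :=
  of fun _ j => j.elim f g

theorem mem_syzygies_colonRow {f : R} {g : ι → R} {v : Option ι → R} :
    v ∈ syzygies (colonRow f g) ↔ f * v none + ∑ i, v (some i) * g i = 0 := by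
  rw [LinearMap.mem_ker, funext_iff, Unique.forall_iff]
  simp [mulVec, dotProduct, colonRow, Fintype.sum_option, mul_comm (g _)]

theorem map_proj_syzygies_colonRow (f : R) (g : ι → R) :
    (syzygies (colonRow f g)).map (LinearMap.proj none) =
      (Ideal.span (Set.range g)).colon {f} := by
  ext x
  rw [Submodule.mem_map, Submodule.mem_colon_singleton, smul_eq_mul,
    Ideal.mem_span_range_iff_exists_fun]
  constructor
  · rintro ⟨v, hv, rfl⟩
    refine ⟨fun i => -v (some i), ?_⟩
    rw [mem_syzygies_colonRow] at hv
    simp only [neg_mul, Finset.sum_neg_distrib, LinearMap.proj_apply]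
    linear_combination -hv
  · rintro ⟨c, hc⟩
    refine ⟨fun j => j.elim x fun i => -c i, mem_syzygies_colonRow.mpr ?_, rfl⟩
    simp only [Option.elim_none, Option.elim_some, neg_mul, Finset.sum_neg_distrib, hc]
    ring

end Colon

theorem exists_span_eq_colon_totalDegree_le {k ι : Type*} [Field k] [Finite ι] {n d : ℕ}
    {f : MvPolynomial (Fin n) k} (hf : f.totalDegree ≤ d) {g : ι → MvPolynomial (Fin n) k}
    (hg : ∀ i, (g i).totalDegree ≤ d) :
    ∃ T : Set (MvPolynomial (Fin n) k), (∀ p ∈ T, p.totalDegree ≤ syzygyBound d n d) ∧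
      Ideal.span T = (Ideal.span (Set.range g)).colon {f} := by
  cases nonempty_fintype ι
  have hrow (i : Unit) (j : Option ι) : (colonRow f g i j).totalDegree ≤ d := by
    cases j with
    | none => exact hf
    | some i => exact hg i
  have hgen := isGeneratedInDegree_syzygies hrow (M := d) (by simp)
  let first : (Option ι → MvPolynomial (Fin n) k) →ₗ[MvPolynomial (Fin n) k] _ :=
    LinearMap.proj none
  refine ⟨first '' {v | v ∈ syzygies (colonRow f g) ∧ ∀ j, (v j).totalDegree ≤ syzygyBound d n d},
    ?_, ?_⟩
  · rintro _ ⟨v, hv, rfl⟩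
    exact hv.2 none
  · calc Ideal.span _ = (spanDegreeLE (syzygies (colonRow f g)) (syzygyBound d n d)).map first :=
          (Submodule.map_span first _).symm
      _ = (syzygies (colonRow f g)).map first := by rw [← hgen.antisymm (spanDegreeLE_le _)]
      _ = (Ideal.span (Set.range g)).colon {f} := map_proj_syzygies_colonRow f g

/-- The quotient ideal `I : (f)` of a nonzero ideal generated in degree
at most `d` by a nonzero polynomial of degree at most `d` is generated by polynomials of
total degree at most `2·(d+1)^(2^(n+1))`. -/
theorem quotient_ideal_bounded_generators
    (k : Type*) [Field k] (n d : ℕ) (hn : 1 ≤ n) (hd : 1 ≤ d)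
    (I : Ideal (MvPolynomial (Fin n) k)) (hI : I ≠ ⊥)
    (S : Set (MvPolynomial (Fin n) k)) (hgen : I = Ideal.span S)
    (hdeg : ∀ g ∈ S, g.totalDegree ≤ d)
    (f : MvPolynomial (Fin n) k) (hf : f ≠ 0) (hfd : f.totalDegree ≤ d) :
    ∃ T : Set (MvPolynomial (Fin n) k),
      (∀ g ∈ T, g.totalDegree ≤ 2 * (d + 1) ^ 2 ^ (n + 1)) ∧
      ∀ g : MvPolynomial (Fin n) k, g ∈ Ideal.span T ↔ f * g ∈ I := by
  obtain ⟨F, hFS, hF⟩ := (Submodule.fg_span_iff_fg_span_finset_subset S).mp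
    (IsNoetherian.noetherian (Ideal.span S))
  obtain ⟨T, hT, hspan⟩ := exists_span_eq_colon_totalDegree_le hfd (g := ((↑) : F → _))
    fun g => hdeg g (hFS g.2)
  have hbound : syzygyBound d n d ≤ 2 * (d + 1) ^ 2 ^ (n + 1) :=
    (syzygyBound_self_le hd n).trans (Nat.le_mul_of_pos_left _ two_pos)
  refine ⟨T, fun g hg => (hT g hg).trans hbound, fun g => ?_⟩
  have hrange : I = Ideal.span (Set.range ((↑) : F → MvPolynomial (Fin n) k)) := by
    rw [Subtype.range_coe]
    exact hgen.trans hF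
  rw [hspan, ← hrange, Submodule.mem_colon_singleton, smul_eq_mul, mul_comm]
end
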